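/- arXiv:math/0701519 — 3 statements merged into one kernel-verified Lean document; each statement's English description precedes it below -/
import Mathlib

section
/- Let f and g be permutably reducible 3-quasigroups of order 4 such that f(x,y,0) = g(x,y,0), f(x,0,z) = g(x,0,z), and f(0,y,z) = g(0,y,z) for all x,y,z ∈ {0,1,2,3}. Then f = g. -/
/-- An `n`-ary quasigroup: uniquely invertible in each place. -/
def IsNQuasigroup {n : ℕ} {S : Type*} (f : (Fin n → S) → S) : Prop :=
  ∀ (i : Fin n) (x : Fin n → S), Function.Bijective fun a => f (Function.update x i a)

/-- Permutable reducibility (Definition 1.4). -/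
def PermutablyReducible {n : ℕ} {S : Type*} (f : (Fin n → S) → S) : Prop :=
  ∃ (m : ℕ) (_ : 2 ≤ m) (_ : m ≤ n - 1)
    (σ : Equiv.Perm (Fin n))
    (g : (Fin m → S) → S)
    (h : (Fin (n - m + 1) → S) → S),
    IsNQuasigroup g ∧ IsNQuasigroup h ∧
    ∀ x : Fin n → S,
      f x = h (Fin.cons (g fun k : Fin m => x (σ ⟨k.val, by have := k.isLt; omega⟩))
                 fun j : Fin (n - m) => x (σ ⟨m + j.val, by have := j.isLt; omega⟩))

/-- `l(0)=l(1)=0`, `l(2)=l(3)=1`. -/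
def lmap : Fin 4 → ZMod 2 := ![0, 0, 1, 1]

/-- Standardly semilinear: the predicate of `f` is pointwise `≤ L`. -/
def StdSemilinear {n : ℕ} (f : (Fin n → Fin 4) → Fin 4) : Prop :=
  ∀ x : Fin n → Fin 4, lmap (f x) = ∑ i, lmap (x i)

def Semilinear {n : ℕ} (f : (Fin n → Fin 4) → Fin 4) : Prop :=
  ∃ (g : (Fin n → Fin 4) → Fin 4) (τ₀ : Equiv.Perm (Fin 4)) (τ : Fin n → Equiv.Perm (Fin 4)),
    IsNQuasigroup g ∧ StdSemilinear g ∧ ∀ x, τ₀ (f x) = g fun i => τ i (x i)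

noncomputable def PrincipalRetract {n k : ℕ} {S : Type*} (f : (Fin n → S) → S) (ι : Fin k → Fin n)
    (c : Fin n → S) : (Fin k → S) → S :=
  fun y => f (Function.extend ι y c)

def IsBinaryQG {S : Type*} (h : S → S → S) : Prop :=
  (∀ a, Function.Bijective (h a)) ∧ ∀ b, Function.Bijective fun a => h a b

def CondA {n : ℕ} {C : Type*} (μ : Fin n → Fin n → C) : Prop :=
  ∀ a b c : Fin n, a ≠ b → a ≠ c → b ≠ c →
    μ a b = μ a c ∨ μ a b = μ b c ∨ μ a c = μ b c

def CondB {n : ℕ} {C : Type*} [DecidableEq C] (μ : Fin n → Fin n → C) : Prop :=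
  ∀ a b c d : Fin n, a ≠ b → a ≠ c → a ≠ d → b ≠ c → b ≠ d → c ≠ d →
    (∃ c₁ c₂ : C, c₁ ≠ c₂ ∧
      [μ a b, μ a c, μ a d, μ b c, μ b d, μ c d].count c₁ = 3 ∧
      [μ a b, μ a c, μ a d, μ b c, μ b d, μ c d].count c₂ = 3) →
    ((μ a b = μ a c ∧ μ a c = μ b c) ∨ (μ a b = μ a d ∧ μ a d = μ b d) ∨
     (μ a c = μ a d ∧ μ a d = μ c d) ∨ (μ b c = μ b d ∧ μ b d = μ c d))

def colorOf {n : ℕ} (f : (Fin n → Fin 4) → Fin 4) (i j : Fin n) : Fin 4 → Fin 4 → Fin 4 :=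
  fun a b => f fun t => if t = i then a else if t = j then b else 0

def Normalized {n : ℕ} (f : (Fin n → Fin 4) → Fin 4) : Prop :=
  ∀ (i : Fin n) (a : Fin 4), f (fun t => if t = i then a else 0) = a

def piPerm : Fin 4 → Fin 4 := ![1, 0, 3, 2]

/-!
A reducible ternary quasigroup has the form `f x = h (g (x j) (x k)) (x i)`, so that its argument
`x i` splits off. If the same argument splits off from both functions, each of them is determined by
its values on the hyperplanes through the base point. Otherwise, up to the order of the arguments,
`f` splits as `(x y) z` and `g` as `x (y z)`, and the common values on the hyperplanes turn these
into the two bracketings of a triple product in one and the same loop.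

It remains to see that a loop `M` of order at most four is associative. If `x`, `y`, `z` are
distinct and different from `1`, then, once `M` is known to be commutative, cancellation shows that
neither `x * y * z` nor `x * (y * z)` is one of the three distinct elements `x * y`, `x * z`,
`y * z`, so both are the fourth one. The same pigeonhole argument handles commutativity and the
degenerate triples.
-/

open Function

theorem eq_of_notMem_of_card_le_length_add_one {S : Type*} {l : List S} (hl : l.Nodup)
    (hS : ENat.card S ≤ l.length + 1) {x y : S} (hx : x ∉ l) (hy : y ∉ l) : x = y := by
  by_contra hxy
  have hnodup : (x :: y :: l).Nodup := by simp [*]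
  have hlt : l.length + 2 ≤ l.length + 1 := mod_cast hnodup.length_le_enatCard.trans hS
  omega

section Loop

variable {M : Type*} [MulOneClass M] [IsCancelMul M]

theorem mul_eq_left_iff {a b : M} : a * b = a ↔ b = 1 := by
  rw [← mul_right_inj a (b := b), mul_one]

theorem mul_eq_right_iff {a b : M} : a * b = b ↔ a = 1 := by
  rw [← mul_left_inj b (b := a), one_mul]

theorem mul_eq_one_symm_of_card_le_four (hM : ENat.card M ≤ 4) {x y : M} (hxy : x * y = 1) :
    y * x = 1 := by
  by_contra hyx
  have hx : x ≠ 1 := by grind [one_mul, mul_one]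
  have hsq : x * x = y := by
    apply eq_of_notMem_of_card_le_length_add_one (l := [1, x, y * x]) (hS := hM) <;>
      grind [mul_right_inj, mul_left_inj, mul_eq_left_iff, mul_eq_right_iff]
  have hmul : x * (y * x) = y := by
    apply eq_of_notMem_of_card_le_length_add_one (l := [1, x, y * x]) (hS := hM) <;>
      grind [mul_right_inj, mul_left_inj, mul_eq_left_iff, mul_eq_right_iff]
  have hy : y = 1 := mul_eq_right_iff.1 (mul_left_cancel (hmul.trans hsq.symm))
  exact hyx (by rw [hy, one_mul, ← hxy, hy, mul_one])

theorem mul_comm_of_card_le_four (hM : ENat.card M ≤ 4) (x y : M) : x * y = y * x := by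
  by_cases hxy : x * y = 1
  · rw [hxy, mul_eq_one_symm_of_card_le_four hM hxy]
  by_cases hyx : y * x = 1
  · rw [hyx, mul_eq_one_symm_of_card_le_four hM hyx]
  obtain rfl | hx := eq_or_ne x 1
  · simp
  obtain rfl | hy := eq_or_ne y 1
  · simp
  obtain rfl | hne := eq_or_ne x y
  · rfl
  apply eq_of_notMem_of_card_le_length_add_one (l := [1, x, y]) (hS := hM) <;>
    grind [mul_eq_left_iff, mul_eq_right_iff]

theorem mul_mul_mul_self_of_card_le_four (hM : ENat.card M ≤ 4) (x : M) :
    x * (x * (x * x)) = x * x * (x * x) := by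
  have comm := mul_comm_of_card_le_four hM
  obtain hsq | hsq := eq_or_ne (x * x) 1
  · simp [hsq]
  have hx : x ≠ 1 := by rintro rfl; simp at hsq
  obtain hcube | hcube := eq_or_ne (x * (x * x)) 1
  · rw [hcube, mul_one]
    by_contra hne
    have habsurd : x * (x * x * (x * x)) = x * x * (x * x) := by
      apply eq_of_notMem_of_card_le_length_add_one (l := [1, x, x * x]) (hS := hM) <;>
        grind [mul_right_inj, mul_left_inj, mul_eq_left_iff]
    exact hx (mul_eq_right_iff.1 habsurd)
  · have hfourth : x * (x * (x * x)) = 1 := by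
      apply eq_of_notMem_of_card_le_length_add_one (l := [x, x * x, x * (x * x)]) (hS := hM) <;>
        grind [mul_right_inj, mul_eq_left_iff, mul_eq_right_iff]
    have hne : x * x * (x * x) ≠ x := fun h => by
      have habsurd : x * x * (x * (x * x)) = 1 := by
        apply eq_of_notMem_of_card_le_length_add_one (l := [x, x * x, x * (x * x)]) (hS := hM) <;>
          grind [mul_right_inj, mul_eq_left_iff, mul_eq_right_iff]
      exact hx (mul_eq_left_iff.1 (mul_right_cancel (habsurd.trans hfourth.symm)))
    rw [hfourth]
    apply eq_of_notMem_of_card_le_length_add_one (l := [x, x * x, x * (x * x)]) (hS := hM) <;>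
      grind [mul_right_inj, mul_left_inj, mul_eq_left_iff, mul_eq_right_iff]

theorem mul_mul_left_self_of_card_le_four (hM : ENat.card M ≤ 4) (x y : M) :
    x * (x * y) = x * x * y := by
  have comm := mul_comm_of_card_le_four hM
  obtain rfl | hx := eq_or_ne x 1
  · simp
  obtain rfl | hy := eq_or_ne y 1
  · simp
  obtain rfl | hxy := eq_or_ne x y
  · exact comm _ _
  obtain rfl | hysq := eq_or_ne y (x * x)
  · exact mul_mul_mul_self_of_card_le_four hM x
  obtain hsq | hsq := eq_or_ne (x * x) 1
  · rw [hsq, one_mul]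
    apply eq_of_notMem_of_card_le_length_add_one (l := [1, x, x * y]) (hS := hM) <;>
      grind [mul_right_inj, mul_eq_left_iff, mul_eq_right_iff]
  · have hinv : x * y = 1 := by
      by_contra hne
      have habsurd : x * y = y := by
        apply eq_of_notMem_of_card_le_length_add_one (l := [1, x, x * x]) (hS := hM) <;>
          grind [mul_right_inj, mul_eq_left_iff]
      exact hx (mul_eq_right_iff.1 habsurd)
    rw [hinv, mul_one]
    apply eq_of_notMem_of_card_le_length_add_one (l := [1, y, x * x]) (hS := hM) <;>
      grind [mul_left_inj, mul_eq_left_iff, mul_eq_right_iff]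

theorem mul_assoc_of_card_le_four (hM : ENat.card M ≤ 4) (x y z : M) :
    x * y * z = x * (y * z) := by
  have comm := mul_comm_of_card_le_four hM
  obtain rfl | hx := eq_or_ne x 1
  · simp
  obtain rfl | hy := eq_or_ne y 1
  · simp
  obtain rfl | hz := eq_or_ne z 1
  · simp
  obtain rfl | hxy := eq_or_ne x y
  · exact (mul_mul_left_self_of_card_le_four hM x z).symm
  obtain rfl | hyz := eq_or_ne y z
  · rw [comm _ y, comm x, comm x, mul_mul_left_self_of_card_le_four hM]
  obtain rfl | hxz := eq_or_ne x z
  · rw [comm _ x, comm x y]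
  apply eq_of_notMem_of_card_le_length_add_one (l := [x * y, x * z, y * z]) (hS := hM) <;>
    grind [mul_right_inj, mul_left_inj, mul_eq_left_iff, mul_eq_right_iff]

end Loop

section PrincipalIsotope

variable {S : Type*} {op : S → S → S}

/-- The principal isotope of a binary quasigroup `op` with identity `op p q`. Its product is read
off from the values of `op` on the two lines through `(p, q)`: the value at `(x, q)` times the value
at `(p, y)` is the value at `(x, y)`. -/
noncomputable abbrev IsBinaryQG.principalIsotope (h : IsBinaryQG op) (p q : S) :
    MulOneClass S where
  mul u v := op (surjInv (h.2 q).2 u) (surjInv (h.1 p).2 v)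
  one := op p q
  one_mul v := by
    change op (surjInv (h.2 q).2 (op p q)) _ = v
    rw [leftInverse_surjInv (h.2 q) p, surjInv_eq (h.1 p).2]
  mul_one u := by
    change op _ (surjInv (h.1 p).2 (op p q)) = u
    rw [leftInverse_surjInv (h.1 p) q, surjInv_eq (h.2 q).2]

theorem IsBinaryQG.principalIsotope_mul (h : IsBinaryQG op) (p q x y : S) :
    (h.principalIsotope p q).mul (op x q) (op p y) = op x y :=
  congrArg₂ op (leftInverse_surjInv (h.2 q) x) (leftInverse_surjInv (h.1 p) y)

theorem IsBinaryQG.isCancelMul_principalIsotope (h : IsBinaryQG op) (p q : S) :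
    @IsCancelMul S (h.principalIsotope p q).toMul :=
  letI := h.principalIsotope p q
  { mul_left_cancel _ _ _ huv := injective_surjInv (h.1 p).2 ((h.1 _).1 huv)
    mul_right_cancel _ _ _ huv := injective_surjInv (h.2 q).2 ((h.2 _).1 huv) }

end PrincipalIsotope

theorem eq_of_split_last_of_split_first {S : Type*} {F G : S → S → S → S} {p q r : S}
    (hS : ENat.card S ≤ 4) (hop : IsBinaryQG fun x y => F x y r)
    (hF : ∀ x y x' y', F x y r = F x' y' r → ∀ z, F x y z = F x' y' z)
    (hG : ∀ y z y' z', G p y z = G p y' z' → ∀ x, G x y z = G x y' z')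
    (hFGx : ∀ y z, F p y z = G p y z) (hFGy : ∀ x z, F x q z = G x q z)
    (hFGz : ∀ x y, F x y r = G x y r) (x y z : S) : F x y z = G x y z := by
  let := hop.principalIsotope p q
  have := hop.isCancelMul_principalIsotope p q
  have mul_xy (x y : S) : F x q r * F p y r = F x y r := hop.principalIsotope_mul p q x y
  have mul_xz (x z : S) : F x q r * F p q z = F x q z := by
    obtain ⟨y, hy : F p y r = F p q z⟩ := (hop.1 p).2 (F p q z)
    rw [← hy, mul_xy, hFGz, hFGy]
    exact hG _ _ _ _ (by rw [← hFGx, hy, hFGx]) x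
  have mul_yz (y z : S) : F p y r * F p q z = F p y z := by
    obtain ⟨x, hx : F x q r = F p y r⟩ := (hop.2 q).2 (F p y r)
    rw [← hx, mul_xz]
    exact hF _ _ _ _ hx z
  obtain ⟨x', hx' : F x' q r = F x y r⟩ := (hop.2 q).2 (F x y r)
  obtain ⟨y', hy' : F p y' r = F p y z⟩ := (hop.1 p).2 (F p y z)
  calc F x y z = F x' q z := hF _ _ _ _ hx'.symm z
    _ = F x q r * F p y r * F p q z := by rw [mul_xy, ← hx', mul_xz]
    _ = F x q r * (F p y r * F p q z) := mul_assoc_of_card_le_four hS _ _ _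
    _ = G x y' r := by rw [mul_yz, ← hy', mul_xy, hFGz]
    _ = G x y z := hG _ _ _ _ (by rw [← hFGx, hy', hFGx]) x

theorem IsNQuasigroup.isBinaryQG_update {n : ℕ} {S : Type*} {f : (Fin n → S) → S}
    (hf : IsNQuasigroup f) {i j : Fin n} (hij : i ≠ j) (x : Fin n → S) :
    IsBinaryQG fun a b => f (update (update x i a) j b) :=
  ⟨fun a => hf j (update x i a), fun b => by
    simpa only [update_comm hij.symm] using hf i (update x j b)⟩

theorem IsNQuasigroup.isBinaryQG_vecCons {S : Type*} {f : (Fin 2 → S) → S}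
    (hf : IsNQuasigroup f) : IsBinaryQG fun a b => f ![a, b] := by
  have update_zero (a b : S) : update ![b, b] 0 a = ![a, b] := by
    ext t; fin_cases t <;> rfl
  have update_one (a b : S) : update ![a, a] 1 b = ![a, b] := by
    ext t; fin_cases t <;> rfl
  exact ⟨fun a => by simpa only [update_one] using hf 1 ![a, a],
    fun b => by simpa only [update_zero] using hf 0 ![b, b]⟩

/-- The `i`-th argument of `f` splits off: `f` is the composition of a binary quasigroup, applied
to the `i`-th argument, with a function of the remaining arguments. The latter is
encoded as a function `g` of all arguments that does not depend on the `i`-th one. -/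
def SplitsOff {n : ℕ} {S : Type*} (f : (Fin n → S) → S) (i : Fin n) : Prop :=
  ∃ (h : S → S → S) (g : (Fin n → S) → S), IsBinaryQG h ∧ (∀ x c, g (update x i c) = g x) ∧
    ∀ x, f x = h (g x) (x i)

theorem PermutablyReducible.exists_splitsOff {S : Type*} {f : (Fin 3 → S) → S}
    (hf : PermutablyReducible f) : ∃ i, SplitsOff f i := by
  obtain ⟨m, hm, hm', σ, g, h, -, hh, hf⟩ := hf
  obtain rfl : m = 2 := by omega
  refine ⟨σ 2, fun a b => h ![a, b], fun x => g fun k => x (σ k.castSucc),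
    hh.isBinaryQG_vecCons, fun x c => congrArg g <| funext fun k => ?_, fun x => ?_⟩
  · exact update_of_ne (σ.injective.ne k.castSucc_lt_last.ne) c x
  · rw [hf]
    refine congrArg h (congrArg (Fin.cons _) (funext fun t => ?_))
    fin_cases t
    rfl

section SplitsOff

variable {n : ℕ} {S : Type*} {f g : (Fin n → S) → S} {o : Fin n → S} {i j : Fin n}

theorem SplitsOff.update_eq_update (hf : SplitsOff f i) {x y : Fin n → S} (hxy : x i = y i)
    (hfxy : f x = f y) (c : S) : f (update x i c) = f (update y i c) := by
  obtain ⟨h, g, hh, hg, hf⟩ := hf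
  have hgxy : g x = g y := (hh.2 (x i)).1 (by simpa only [hf, hxy] using hfxy)
  simp only [hf, hg, hgxy, update_self]

theorem SplitsOff.eq_of_forall_eq_on_hyperplane_of_same (hn : 2 < n) (hf : IsNQuasigroup f)
    (hfi : SplitsOff f i) (hgi : SplitsOff g i) (hfg : ∀ x l, x l = o l → f x = g x) : f = g := by
  obtain ⟨j, hji, -⟩ := Fin.exists_ne_and_ne_of_two_lt i i hn
  obtain ⟨k, hki, hkj⟩ := Fin.exists_ne_and_ne_of_two_lt i j hn
  funext x
  obtain ⟨a, ha : f (update o k a) = f (update x i (o i))⟩ := (hf k o).2 _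
  have hai : update o k a i = update x i (o i) i := by simp [hki.symm]
  have hga : g (update o k a) = g (update x i (o i)) := by
    rw [← hfg _ j (by simp [hkj.symm]), ha, hfg _ i (by simp)]
  calc f x = f (update (update x i (o i)) i (x i)) := by simp
    _ = f (update (update o k a) i (x i)) := (hfi.update_eq_update hai ha _).symm
    _ = g (update (update o k a) i (x i)) := hfg _ j (by simp [hji, hkj.symm])
    _ = g (update (update x i (o i)) i (x i)) := hgi.update_eq_update hai hga _
    _ = g x := by simp

theorem SplitsOff.eq_of_forall_eq_on_hyperplane_of_ne (hS : ENat.card S ≤ 4) (hn : 2 < n)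
    (hf : IsNQuasigroup f) (hfi : SplitsOff f i) (hgj : SplitsOff g j) (hij : i ≠ j)
    (hfg : ∀ x l, x l = o l → f x = g x) : f = g := by
  obtain ⟨k, hki, hkj⟩ := Fin.exists_ne_and_ne_of_two_lt i j hn
  funext x
  let v (a b c : S) : Fin n → S := update (update (update x j a) k b) i c
  have update_i (a b c d : S) : update (v a b c) i d = v a b d := update_idem _ _ _
  have update_j (a b c d : S) : update (v a b c) j d = v d b c := by
    simp only [v, update_comm hij, update_comm hkj, update_idem]
  have heq := eq_of_split_last_of_split_first (F := fun a b c => f (v a b c))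
    (G := fun a b c => g (v a b c)) (p := o j) (q := o k) (r := o i) hS ?_ ?_ ?_ ?_ ?_ ?_
    (x j) (x k) (x i)
  · simpa [v] using heq
  · simpa only [v, update_comm hki, update_comm hij.symm] using
      hf.isBinaryQG_update hkj.symm (update x i (o i))
  · intro a b a' b' h c
    simpa only [update_i] using hfi.update_eq_update (by simp [v]) h c
  · intro b c b' c' h a
    simpa only [update_j] using hgj.update_eq_update (by simp [v, hij.symm, hkj.symm]) h a
  · exact fun b c => hfg _ j (by simp [v, hij.symm, hkj.symm])
  · exact fun a c => hfg _ k (by simp [v, hki])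
  · exact fun a b => hfg _ i (by simp [v])

end SplitsOff

theorem stmt9_general {S : Type*} (hS : ENat.card S ≤ 4) {f g : (Fin 3 → S) → S} (o : Fin 3 → S)
    (hf : IsNQuasigroup f) (hfr : PermutablyReducible f) (hgr : PermutablyReducible g)
    (hfg : ∀ x l, x l = o l → f x = g x) : f = g := by
  obtain ⟨i, hi⟩ := hfr.exists_splitsOff
  obtain ⟨j, hj⟩ := hgr.exists_splitsOff
  obtain rfl | hij := eq_or_ne i j
  · exact hi.eq_of_forall_eq_on_hyperplane_of_same (by decide) hf hj hfg
  · exact hi.eq_of_forall_eq_on_hyperplane_of_ne hS (by decide) hf hj hij hfg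

/-- Proposition 3.3: permutably reducible 3-quasigroups of order 4
agreeing on all triples with a zero in any fixed place coincide. -/
theorem stmt9 (f g : (Fin 3 → Fin 4) → Fin 4)
    (hf : IsNQuasigroup f) (hg : IsNQuasigroup g)
    (hfr : PermutablyReducible f) (hgr : PermutablyReducible g)
    (h1 : ∀ x : Fin 3 → Fin 4, x 2 = 0 → f x = g x)
    (h2 : ∀ x : Fin 3 → Fin 4, x 1 = 0 → f x = g x)
    (h3 : ∀ x : Fin 3 → Fin 4, x 0 = 0 → f x = g x) :
    f = g :=
  stmt9_general (by simp) 0 hf hfr hgr fun x l => by fin_cases l; exacts [h3 x, h2 x, h1 x]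
end

section
/- Let n ≥ 5 and let f be an n-quasigroup of order 4 all of whose principal 3-retracts and principal 4-retracts are permutably reducible. Then f is completely reducible, i.e., f can be represented as a repetition-free composition of n−1 binary quasigroups. -/
/-- Complete reducibility: `f` is permutably reducible and so are all its
principal retracts of arity more than 2. -/
def CompletelyReducible {n : ℕ} (f : (Fin n → Fin 4) → Fin 4) : Prop :=
  PermutablyReducible f ∧
  ∀ (k : ℕ), 3 ≤ k → k ≤ n → ∀ (ι : Fin k → Fin n), Function.Injective ι →
    ∀ c : Fin n → Fin 4, PermutablyReducible (PrincipalRetract f ι c)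

/-!
Fix `o` and relabel the arguments so that putting `o` in all places but one returns the remaining
argument. The binary retracts through `o` are then loops of order at most 4, hence abelian groups.
It follows that a reducible ternary retract is determined by its values at points having some
coordinate `o`, and, by induction on the number of coordinates other than `o`, that a quasigroup
with reducible ternary retracts is determined by its binary retracts through `o`.

Colour each pair of places by its binary retract. Reducibility of the 3- and 4-retracts makes this
colouring a symbolic ultrametric: no triangle has three colours, and no four places split into two
monochromatic paths. A symbolic ultrametric has twins, two places no third place distinguishes.
Merging the twins `i`, `j` by their own binary retract does not change any binary retract of `f`,
so it does not change `f`, and `f` factors through this operation in the arguments `i` and `j`.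
-/

/-- `op` is a binary quasigroup operation with two-sided identity `e`, not assumed associative. -/
structure IsLoop {S : Type*} (op : S → S → S) (e : S) : Prop where
  isBinaryQG : IsBinaryQG op
  id_left : ∀ a, op e a = a
  id_right : ∀ a, op a e = a

theorem eq_of_notMem_of_nodup {S : Type*} [Finite S] (hS : Nat.card S ≤ 4) {a b c d x : S}
    (hx : x ∉ [a, b, c]) (h : [a, b, c, d].Nodup) : x = d := by
  by_contra hxd
  have := Fintype.ofFinite S
  have hnodup : [x, a, b, c, d].Nodup := by grind
  have hle := hnodup.length_le_card
  rw [← Nat.card_eq_fintype_card, List.length] at hle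
  simp only [List.length] at hle
  omega

namespace IsLoop

variable {S : Type*} {op : S → S → S} {e : S}

theorem apply_left_inj (h : IsLoop op e) {a b c : S} : op a b = op a c ↔ b = c :=
  (h.isBinaryQG.1 a).1.eq_iff

theorem apply_right_inj (h : IsLoop op e) {a b c : S} : op a c = op b c ↔ a = b :=
  (h.isBinaryQG.2 c).1.eq_iff

theorem apply_eq_left_iff (h : IsLoop op e) {a b : S} : op a b = a ↔ b = e := by
  simpa only [h.id_right] using h.apply_left_inj (a := a) (b := b) (c := e)

theorem apply_eq_right_iff (h : IsLoop op e) {a b : S} : op a b = b ↔ a = e := by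
  simpa only [h.id_left] using h.apply_right_inj (a := a) (b := e) (c := b)

variable [Finite S]

theorem apply_swap_eq_id (hS : Nat.card S ≤ 4) (h : IsLoop op e) {a b : S}
    (hab : op a b = e) : op b a = e := by
  by_contra hba
  have hae : a ≠ e := by
    rintro rfl
    exact hba ((h.id_right b).trans ((h.id_left b).symm.trans hab))
  have hbe : b ≠ e := by
    rintro rfl
    exact hba ((h.id_left a).trans ((h.id_right a).symm.trans hab))
  have hca : op b a ≠ a := mt h.apply_eq_right_iff.1 hbe
  have hcb : op b a ≠ b := mt h.apply_eq_left_iff.1 hae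
  have haa : op a a = b := eq_of_notMem_of_nodup hS (a := e) (b := a) (c := op b a)
    (by grind [h.apply_left_inj, h.apply_right_inj, h.apply_eq_left_iff]) (by grind)
  have hac : op a (op b a) = e := eq_of_notMem_of_nodup hS (a := a) (b := b) (c := op b a)
    (by grind [h.apply_left_inj, h.apply_right_inj, h.apply_eq_left_iff, h.apply_eq_right_iff])
    (by grind)
  exact hcb (h.apply_left_inj.1 (hac.trans hab.symm))

protected theorem comm (hS : Nat.card S ≤ 4) (h : IsLoop op e) (a b : S) :
    op a b = op b a := by
  by_contra hne
  have ha : a ≠ e := by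
    rintro rfl
    exact hne ((h.id_left b).trans (h.id_right b).symm)
  have hb : b ≠ e := by
    rintro rfl
    exact hne ((h.id_right a).trans (h.id_left a).symm)
  have hab : op a b ≠ e := fun hab => hne (hab.trans (h.apply_swap_eq_id hS hab).symm)
  have hba : op b a ≠ e := fun hba => hne ((h.apply_swap_eq_id hS hba).trans hba.symm)
  exact hne <| eq_of_notMem_of_nodup hS (a := e) (b := a) (c := b)
    (by grind [h.apply_eq_left_iff, h.apply_eq_right_iff])
    (by grind [h.apply_eq_left_iff, h.apply_eq_right_iff])

theorem right_comm_self (hS : Nat.card S ≤ 4) (h : IsLoop op e) {x z : S}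
    (hx : x ≠ e) (hz : z ≠ e) (hxz : x ≠ z) : op (op x x) z = op (op x z) x := by
  have inj : ∀ {a b c}, op a b = op a c → b = c := h.apply_left_inj.1
  have fix : ∀ {a b}, op a b = a → b = e := h.apply_eq_left_iff.1
  have comm := h.comm hS
  by_cases hxx : op x x = e
  · have : op (op x z) x = z :=
      eq_of_notMem_of_nodup hS (a := e) (b := x) (c := op x z) (by grind) (by grind)
    rw [hxx, h.id_left, this]
  by_cases hxxz : op x x = z
  · by_cases hxz' : op x z = e
    · rw [hxz', h.id_left, hxxz]
      by_contra hzz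
      have : op x (op z z) = x :=
        eq_of_notMem_of_nodup hS (a := e) (b := z) (c := op z z) (by grind) (by grind)
      grind
    · have hux : op (op x z) x = e :=
        eq_of_notMem_of_nodup hS (a := x) (b := z) (c := op x z) (by grind) (by grind)
      have hzz : op z z ≠ x := by
        intro hzz
        have : op z (op x z) = e :=
          eq_of_notMem_of_nodup hS (a := x) (b := z) (c := op x z) (by grind) (by grind)
        grind
      rw [hxxz, hux]
      exact eq_of_notMem_of_nodup hS (a := x) (b := z) (c := op x z) (by grind) (by grind)
  · have hxz' : op x z = e :=
      eq_of_notMem_of_nodup hS (a := x) (b := z) (c := op x x) (by grind) (by grind)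
    rw [hxz', h.id_left]
    exact eq_of_notMem_of_nodup hS (a := e) (b := z) (c := op x x) (by grind) (by grind)

protected theorem right_comm (hS : Nat.card S ≤ 4) (h : IsLoop op e) (x y z : S) :
    op (op x y) z = op (op x z) y := by
  have inj : ∀ {a b c}, op a b = op a c → b = c := h.apply_left_inj.1
  have fix : ∀ {a b}, op a b = a → b = e := h.apply_eq_left_iff.1
  have comm := h.comm hS
  rcases eq_or_ne x e with rfl | hx
  · rw [h.id_left, h.id_left, comm]
  rcases eq_or_ne y e with rfl | hy
  · rw [h.id_right, h.id_right]
  rcases eq_or_ne z e with rfl | hz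
  · rw [h.id_right, h.id_right]
  rcases eq_or_ne y z with rfl | hyz
  · rfl
  rcases eq_or_ne x y with rfl | hxy
  · exact h.right_comm_self hS hx hz hyz
  rcases eq_or_ne x z with rfl | hxz
  · exact (h.right_comm_self hS hx hy hxy).symm
  have mem (w : S) : w = e ∨ w = x ∨ w = y ∨ w = z := by
    by_contra! hw
    exact hw.2.2.2 (eq_of_notMem_of_nodup hS (a := e) (b := x) (c := y) (by grind) (by grind))
  -- As `e, x, y, z` exhaust `S`, the table of `op` is that of `ℤ/4` or `(ℤ/2)²`.
  have hxy := mem (op x y)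
  have hxz := mem (op x z)
  have hyz := mem (op y z)
  have hyy := mem (op y y)
  have hzz := mem (op z z)
  grind [h.id_left]

end IsLoop

section Retracts

variable {n k l : ℕ} {S : Type*} {f : (Fin n → S) → S} {ι : Fin k → Fin n}

theorem extend_eq_iff (hι : Function.Injective ι) {y : Fin k → S} {c x : Fin n → S} :
    Function.extend ι y c = x ↔ (∀ a, y a = x (ι a)) ∧ ∀ t ∉ Set.range ι, c t = x t := by
  refine ⟨?_, fun ⟨hy, hc⟩ => funext fun t => ?_⟩
  · rintro rfl
    exact ⟨fun a => (hι.extend_apply y c a).symm,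
      fun t ht => (Function.extend_apply' y c t ht).symm⟩
  · by_cases ht : t ∈ Set.range ι
    · obtain ⟨a, rfl⟩ := ht
      rw [hι.extend_apply, hy]
    · rw [Function.extend_apply' _ _ _ ht, hc t ht]

theorem extend_update_left (hι : Function.Injective ι) (y : Fin k → S) (c : Fin n → S) (a : Fin k)
    (b : S) : Function.extend ι (Function.update y a b) c =
      Function.update (Function.extend ι y c) (ι a) b := by
  refine (extend_eq_iff hι).2 ⟨fun a' => ?_, fun t ht => ?_⟩
  · simp only [Function.update_apply, hι.eq_iff, hι.extend_apply]
  · rw [Function.update_of_ne (fun h => ht ⟨a, h.symm⟩), Function.extend_apply' _ _ _ ht]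

theorem IsNQuasigroup.principalRetract (hf : IsNQuasigroup f) (hι : Function.Injective ι)
    (c : Fin n → S) : IsNQuasigroup (PrincipalRetract f ι c) := fun a y => by
  simpa only [PrincipalRetract, extend_update_left hι] using hf (ι a) (Function.extend ι y c)

theorem principalRetract_comp (f : (Fin n → S) → S) (hι : Function.Injective ι) (x : Fin n → S) :
    PrincipalRetract f ι x (x ∘ ι) = f x :=
  congrArg f ((extend_eq_iff hι).2 ⟨fun _ => rfl, fun _ _ => rfl⟩)

theorem principalRetract_principalRetract (f : (Fin n → S) → S) (hι : Function.Injective ι)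
    (c : Fin n → S) {κ : Fin l → Fin k} (hκ : Function.Injective κ) (d : Fin k → S) :
    PrincipalRetract (PrincipalRetract f ι c) κ d =
      PrincipalRetract f (ι ∘ κ) (Function.extend ι d c) := by
  funext y
  refine (congrArg f ((extend_eq_iff (hι.comp hκ)).2 ⟨fun b => ?_, fun t ht => ?_⟩)).symm
  · rw [Function.comp_apply, hι.extend_apply, hκ.extend_apply]
  · by_cases hr : t ∈ Set.range ι
    · obtain ⟨a, rfl⟩ := hr
      rw [hι.extend_apply, hι.extend_apply,
        Function.extend_apply' _ _ _ fun ⟨b, hb⟩ => ht ⟨b, congrArg ι hb⟩]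
    · rw [Function.extend_apply' _ _ _ hr, Function.extend_apply' _ _ _ hr]

/-- All principal `k`-retracts of `f` are permutably reducible. -/
def RetractsReducible (f : (Fin n → S) → S) (k : ℕ) : Prop :=
  ∀ ι : Fin k → Fin n, Function.Injective ι → ∀ c : Fin n → S,
    PermutablyReducible (PrincipalRetract f ι c)

theorem RetractsReducible.principalRetract (hf : RetractsReducible f l)
    (hι : Function.Injective ι) (c : Fin n → S) : RetractsReducible (PrincipalRetract f ι c) l :=
  fun κ hκ d => by
    rw [principalRetract_principalRetract f hι c hκ d]
    exact hf _ (hι.comp hκ) _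

/-- The isotope of `f` in which the `i`-th argument is relabelled by the permutation `s i`; the
values of `f` are not relabelled. -/
def isotope (f : (Fin n → S) → S) (s : Fin n → Equiv.Perm S) : (Fin n → S) → S :=
  fun x => f fun i => s i (x i)

theorem isotope_injective (s : Fin n → Equiv.Perm S) :
    Function.Injective fun f : (Fin n → S) → S => isotope f s := fun f g h => by
  funext x
  simpa [isotope] using congrFun h fun i => (s i).symm (x i)

theorem IsNQuasigroup.isotope (hf : IsNQuasigroup f) (s : Fin n → Equiv.Perm S) :
    IsNQuasigroup (isotope f s) := fun i x => by
  have h : ∀ a, (fun t => s t (Function.update x i a t)) =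
      Function.update (fun t => s t (x t)) i (s i a) := fun a =>
    funext fun t => Function.apply_update (fun t => s t) x i a t
  simpa only [_root_.isotope, h, Function.comp_def] using (hf i _).comp (s i).bijective

theorem PermutablyReducible.isotope (hf : PermutablyReducible f) (s : Fin n → Equiv.Perm S) :
    PermutablyReducible (isotope f s) := by
  obtain ⟨m, hm, hmn, σ, g, h, hg, hh, hfac⟩ := hf
  refine ⟨m, hm, hmn, σ, _, _, hg.isotope fun k => s (σ ⟨k, by have := k.isLt; omega⟩),
    hh.isotope (Fin.cons 1 fun j => s (σ ⟨m + j, by have := j.isLt; omega⟩)), fun x => ?_⟩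
  rw [_root_.isotope, hfac]
  refine congrArg h (funext fun t => ?_)
  cases t using Fin.cases <;> rfl

theorem principalRetract_isotope (hι : Function.Injective ι) (s : Fin n → Equiv.Perm S)
    (c : Fin n → S) : PrincipalRetract (isotope f s) ι c =
      isotope (PrincipalRetract f ι fun i => s i (c i)) (s ∘ ι) := by
  funext y
  refine congrArg f ((extend_eq_iff hι).2 ⟨fun a => ?_, fun t ht => ?_⟩).symm
  · rw [hι.extend_apply, Function.comp_apply]
  · rw [Function.extend_apply' _ _ _ ht]

theorem RetractsReducible.isotope (hf : RetractsReducible f k) (s : Fin n → Equiv.Perm S) :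
    RetractsReducible (isotope f s) k := fun ι hι c => by
  rw [principalRetract_isotope hι]
  exact (hf ι hι _).isotope _

end Retracts

section Normalization

variable {n : ℕ} {S : Type*} {f : (Fin n → S) → S} {o : S} {i j : Fin n}

/-- `f` returns `a` at every point with one coordinate equal to `a` and all others equal to `o`. -/
def NormalizedAt (f : (Fin n → S) → S) (o : S) : Prop :=
  ∀ i a, f (Function.update (fun _ => o) i a) = a

theorem IsNQuasigroup.exists_normalizedAt_isotope (hf : IsNQuasigroup f) (o : S) :
    ∃ s : Fin n → Equiv.Perm S,
      (∀ i, s i (f fun _ => o) = o) ∧ NormalizedAt (_root_.isotope f s) (f fun _ => o) := by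
  let s : Fin n → Equiv.Perm S := fun i => (Equiv.ofBijective _ (hf i fun _ => o)).symm
  have hs : ∀ i a, f (Function.update (fun _ => o) i (s i a)) = a := fun i a =>
    (Equiv.ofBijective _ (hf i fun _ => o)).apply_symm_apply a
  have hso : ∀ i, s i (f fun _ => o) = o := fun i =>
    (hf i fun _ => o).1 ((hs i _).trans (congrArg f (Function.update_eq_self i _).symm))
  refine ⟨s, hso, fun i a => ?_⟩
  have h := funext fun t => Function.apply_update (fun t => s t) (fun _ => f fun _ => o) i a t
  simp only [hso] at h
  rw [_root_.isotope, h, hs]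

/-- The binary retract of `f` in the places `i`, `j` through the point `(o, …, o)`. If `i = j`,
the argument `a` is discarded. -/
def binaryRetract (f : (Fin n → S) → S) (o : S) (i j : Fin n) (a b : S) : S :=
  f (Function.update (Function.update (fun _ => o) i a) j b)

theorem binaryRetract_swap (f : (Fin n → S) → S) (o : S) (hij : i ≠ j) (a b : S) :
    binaryRetract f o i j a b = binaryRetract f o j i b a := by
  rw [binaryRetract, Function.update_comm hij, binaryRetract]

namespace NormalizedAt

theorem binaryRetract_id_left (h : NormalizedAt f o) (i j : Fin n) (b : S) :
    binaryRetract f o i j o b = b := by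
  rw [binaryRetract, Function.update_eq_self i fun _ => o, h]

theorem binaryRetract_id_right (h : NormalizedAt f o) (hij : i ≠ j) (a : S) :
    binaryRetract f o i j a o = a := by
  rw [binaryRetract_swap f o hij, h.binaryRetract_id_left]

theorem isLoop_binaryRetract (h : NormalizedAt f o) (hf : IsNQuasigroup f) (hij : i ≠ j) :
    IsLoop (binaryRetract f o i j) o where
  isBinaryQG := ⟨fun _ => hf j _, fun b => by
    simpa only [binaryRetract_swap f o hij] using! hf i (Function.update (fun _ => o) j b)⟩
  id_left := h.binaryRetract_id_left i j
  id_right := h.binaryRetract_id_right hij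

theorem binaryRetract_symm [Finite S] (hS : Nat.card S ≤ 4) (h : NormalizedAt f o)
    (hf : IsNQuasigroup f) (i j : Fin n) : binaryRetract f o i j = binaryRetract f o j i := by
  rcases eq_or_ne i j with rfl | hij
  · rfl
  funext a b
  rw [(h.isLoop_binaryRetract hf hij).comm hS, binaryRetract_swap f o hij]

end NormalizedAt

end Normalization

section Blocks

variable {n : ℕ} {S : Type*} {f g : (Fin n → S) → S} {A : Finset (Fin n)} {o : S}
  {i j k : Fin n}

/-- `f` factors through an operation in the arguments with places in `A`: whether two assignments
to these arguments are interchangeable does not depend on the other arguments. -/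
def IsBlock (f : (Fin n → S) → S) (A : Finset (Fin n)) : Prop :=
  ∀ x y z : Fin n → S, (∀ t ∉ A, x t = y t) → f x = f y → f (A.piecewise x z) = f (A.piecewise y z)

theorem PermutablyReducible.exists_isBlock (hf : PermutablyReducible f) :
    ∃ A : Finset (Fin n), 2 ≤ A.card ∧ A.card ≤ n - 1 ∧ IsBlock f A := by
  obtain ⟨m, hm, hmn, σ, g, h, -, hh, hfac⟩ := hf
  let A := (Finset.univ.filter fun k : Fin n => k.val < m).map σ.toEmbedding
  have hmem : ∀ k : Fin n, σ k ∈ A ↔ k.val < m := by simp [A]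
  have hcard : A.card = m := by
    rw [Finset.card_map, Fin.card_filter_val_lt]
    omega
  have hinj : ∀ a b t, h (Fin.cons a t) = h (Fin.cons b t) → a = b := fun a b t hab =>
    (hh 0 (Fin.cons a t)).1 (by simpa only [Fin.update_cons_zero] using hab)
  refine ⟨A, by omega, by omega, fun x y z hxy hf => ?_⟩
  have hin : ∀ k : Fin m, σ ⟨k, by omega⟩ ∈ A := fun k => (hmem _).2 k.isLt
  have hout : ∀ j : Fin (n - m), σ ⟨m + j, by omega⟩ ∉ A := fun j => by simp [hmem]
  simp only [hfac, hxy _ (hout _)] at hf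
  simp only [hfac, Finset.piecewise_eq_of_mem _ _ _ (hin _),
    Finset.piecewise_eq_of_notMem _ _ _ (hout _), hinj _ _ _ hf]

namespace IsBlock

theorem apply_eq (hA : IsBlock f A) (hf : NormalizedAt f o) (hi : i ∈ A) (x : Fin n → S) :
    f x = f (A.piecewise (Function.update (fun _ => o) i (f (A.piecewise x fun _ => o))) x) := by
  have h := hA (A.piecewise x fun _ => o)
    (Function.update (fun _ => o) i (f (A.piecewise x fun _ => o))) x (fun t ht => ?_) (hf i _).symm
  · rwa [A.piecewise_idem_left, A.piecewise_same] at h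
  · rw [A.piecewise_eq_of_notMem _ _ ht, Function.update_of_ne (ne_of_mem_of_not_mem hi ht).symm]

theorem ext (hA : IsBlock f A) (hA' : IsBlock g A) (hf : NormalizedAt f o)
    (hg : NormalizedAt g o) (hA2 : 2 ≤ A.card) (hAn : A.card < n)
    (h : ∀ x, (∃ t, x t = o) → f x = g x) : f = g := by
  obtain ⟨i, hi, j, hj, hij⟩ := Finset.one_lt_card.1 hA2
  obtain ⟨k, hk⟩ : ∃ k, k ∉ A := by
    by_contra! hA
    rw [Finset.eq_univ_iff_forall.2 hA, Finset.card_fin] at hAn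
    exact hAn.false
  funext x
  rw [hA.apply_eq hf hi, hA'.apply_eq hg hi,
    h (A.piecewise x _) ⟨k, A.piecewise_eq_of_notMem _ _ hk⟩]
  refine h _ ⟨j, ?_⟩
  rw [A.piecewise_eq_of_mem _ _ hj, Function.update_of_ne hij.symm]

theorem binaryRetract_eq (hA : IsBlock f A) (hf : NormalizedAt f o) (hi : i ∈ A) (hj : j ∈ A)
    (hk : k ∉ A) : binaryRetract f o i k = binaryRetract f o j k := by
  have h : ∀ t ∈ A, ∀ a b, A.piecewise (Function.update (fun _ => o) t a)
      (Function.update (fun _ => o) k b) = Function.update (Function.update (fun _ => o) t a) k b :=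
    fun t ht a b => by
      rw [← A.update_piecewise_of_notMem _ _ hk, ← A.update_piecewise_of_mem _ _ ht,
        A.piecewise_same]
  funext a b
  rw [binaryRetract, binaryRetract, ← h i hi, ← h j hj]
  refine hA _ _ _ (fun t ht => ?_) ((hf i a).trans (hf j a).symm)
  rw [Function.update_of_ne (ne_of_mem_of_not_mem hi ht).symm,
    Function.update_of_ne (ne_of_mem_of_not_mem hj ht).symm]

end IsBlock

end Blocks

section Rigidity

variable {n : ℕ} {S : Type*} {o : S}

theorem IsBlock.apply_eq_of_pair {p : (Fin 3 → S) → S} {i j k : Fin 3} (hij : i ≠ j) (hik : i ≠ k)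
    (hjk : j ≠ k) (hA : IsBlock p {i, j}) (hp : NormalizedAt p o) (x : Fin 3 → S) :
    p x = binaryRetract p o i k (binaryRetract p o i j (x i) (x j)) (x k) := by
  have cover : ∀ t, t = i ∨ t = j ∨ t = k := by omega
  have hinner : ({i, j} : Finset _).piecewise x (fun _ => o) =
      Function.update (Function.update (fun _ => o) i (x i)) j (x j) := by
    funext t
    rcases cover t with rfl | rfl | rfl <;> simp [*, Ne.symm]
  have houter : ∀ w, ({i, j} : Finset _).piecewise (Function.update (fun _ => o) i w) x =
      Function.update (Function.update (fun _ => o) i w) k (x k) := fun w => by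
    funext t
    rcases cover t with rfl | rfl | rfl <;> simp [*, Ne.symm]
  rw [hA.apply_eq hp (Finset.mem_insert_self i _), houter, hinner, binaryRetract, binaryRetract]

theorem eq_of_eqOn_of_normalizedAt [Finite S] (hS : Nat.card S ≤ 4) {p q : (Fin 3 → S) → S}
    (hp : IsNQuasigroup p) (hpr : PermutablyReducible p)
    (hqr : PermutablyReducible q) (hpo : NormalizedAt p o) (hqo : NormalizedAt q o)
    (h : ∀ x, (∃ t, x t = o) → p x = q x) : p = q := by
  obtain ⟨A, hA2, hA3, hA⟩ := hpr.exists_isBlock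
  obtain ⟨B, hB2, hB3, hB⟩ := hqr.exists_isBlock
  rcases eq_or_ne A B with rfl | hAB
  · exact hA.ext hB hpo hqo hA2 (by omega) h
  obtain ⟨i, j, k, hij, hik, hjk, rfl, rfl⟩ : ∃ i j k : Fin 3,
      i ≠ j ∧ i ≠ k ∧ j ≠ k ∧ A = {i, j} ∧ B = {i, k} := by
    clear hA hB
    revert A B
    decide
  have hpq : binaryRetract p o = binaryRetract q o := by
    funext a b x y
    obtain ⟨t, hta, htb⟩ : ∃ t, t ≠ a ∧ t ≠ b := by
      clear h hpo hqo
      revert a b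
      decide
    exact h _ ⟨t, by rw [Function.update_of_ne htb, Function.update_of_ne hta]⟩
  have hAik : binaryRetract p o i k = binaryRetract p o j k :=
    hA.binaryRetract_eq hpo (by simp) (by simp) (by simp [hik.symm, hjk.symm])
  have hBij : binaryRetract p o i j = binaryRetract p o j k := by
    rw [hpq, hB.binaryRetract_eq hqo (i := i) (j := k) (by simp) (by simp)
      (by simp [hij.symm, hjk]), ← hpq, hpo.binaryRetract_symm hS hp]
  -- Both sides are products of `x i`, `x j`, `x k` in one abelian group.
  funext x
  rw [hA.apply_eq_of_pair hij hik hjk hpo, hB.apply_eq_of_pair hik hij hjk.symm hqo, ← hpq, hAik,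
    hBij, (hpo.isLoop_binaryRetract hp hjk).right_comm hS]

theorem eq_of_eqOn_of_permutablyReducible [Finite S] (hS : Nat.card S ≤ 4)
    {p q : (Fin 3 → S) → S} (hp : IsNQuasigroup p)
    (hpr : PermutablyReducible p) (hqr : PermutablyReducible q)
    (h : ∀ x, (∃ t, x t = o) → p x = q x) : p = q := by
  obtain ⟨s, hso, hps⟩ := hp.exists_normalizedAt_isotope o
  have hiso : ∀ x, (∃ t, x t = p fun _ => o) → isotope p s x = isotope q s x :=
    fun x ⟨t, ht⟩ => h _ ⟨t, by rw [ht, hso]⟩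
  have hqs : NormalizedAt (isotope q s) (p fun _ => o) := fun i a => by
    obtain ⟨t, ht⟩ := exists_ne i
    rw [← hiso _ ⟨t, Function.update_of_ne ht _ _⟩, hps]
  exact isotope_injective s (eq_of_eqOn_of_normalizedAt hS (hp.isotope s)
    (hpr.isotope s) (hqr.isotope s) hps hqs hiso)

theorem eq_of_binaryRetract_eq [Finite S] (hS : Nat.card S ≤ 4) (hn : 2 ≤ n)
    {f g : (Fin n → S) → S} (hf : IsNQuasigroup f) (hfr : RetractsReducible f 3)
    (hgr : RetractsReducible g 3) (h : binaryRetract f o = binaryRetract g o) : f = g := by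
  classical
  funext x
  induction hd : (Finset.univ.filter fun t => x t ≠ o).card using Nat.strong_induction_on
    generalizing x with
  | _ d ih =>
  rcases le_or_gt d 2 with hd2 | hd3
  · obtain ⟨T, hT, hT2⟩ := Finset.exists_superset_card_eq (hd.trans_le hd2) (by simpa using hn)
    obtain ⟨i, j, -, rfl⟩ := Finset.card_eq_two.1 hT2
    have hx : x = Function.update (Function.update (fun _ => o) i (x i)) j (x j) := by
      funext t
      have := @hT t
      simp only [Finset.mem_filter_univ, Finset.mem_insert, Finset.mem_singleton] at this
      grind
    rw [hx]
    exact congrFun₂ (congrFun₂ h i j) (x i) (x j)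
  · obtain ⟨T, hT, hT3⟩ := Finset.exists_subset_card_eq (hd3.trans_eq hd.symm)
    let ι := T.orderEmbOfFin hT3
    have hι : Function.Injective ι := ι.injective
    have hιx : ∀ a, x (ι a) ≠ o := fun a =>
      (Finset.mem_filter.1 (hT (T.orderEmbOfFin_mem hT3 a))).2
    rw [← principalRetract_comp f hι x, ← principalRetract_comp g hι x]
    refine congrFun (eq_of_eqOn_of_permutablyReducible (o := o) hS (hf.principalRetract hι x)
      (hfr ι hι x) (hgr ι hι x) fun y ⟨a, ha⟩ => ?_) _
    refine ih _ (hd ▸ Finset.card_lt_card (Finset.ssubset_iff.2 ⟨ι a, ?_, ?_⟩)) _ rfl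
    · simp only [Finset.mem_filter_univ, hι.extend_apply, ha, ne_eq, not_true, not_false_eq_true]
    · refine Finset.insert_subset ((Finset.mem_filter_univ _).2 (hιx a)) fun t ht => ?_
      rw [Finset.mem_filter_univ] at ht ⊢
      by_cases hr : t ∈ Set.range ι
      · obtain ⟨b, rfl⟩ := hr
        exact hιx b
      · rwa [Function.extend_apply' _ _ _ hr] at ht

end Rigidity

section Merging

variable {n k : ℕ} {S : Type*} {f : (Fin n → S) → S} {φ : S → S → S} {o : S} {i j : Fin n}

/-- Merge the arguments in places `i` and `j` by `φ`: the result is put in place `i`, and place `j`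
is filled with `o`. -/
def mergeArgs (φ : S → S → S) (o : S) (i j : Fin n) (x : Fin n → S) : Fin n → S :=
  Function.update (Function.update x i (φ (x i) (x j))) j o

theorem mergeArgs_apply (φ : S → S → S) (o : S) (i j : Fin n) (x : Fin n → S) (t : Fin n) :
    mergeArgs φ o i j x t = if t = j then o else if t = i then φ (x i) (x j) else x t := by
  rw [mergeArgs, Function.update_apply, Function.update_apply]

theorem mergeArgs_of_apply_right (hφ : ∀ a, φ a o = a) {x : Fin n → S} (hx : x j = o) :
    mergeArgs φ o i j x = x := by
  rw [mergeArgs, hx, hφ, Function.update_eq_self, ← hx, Function.update_eq_self]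

theorem mergeArgs_update_left (hij : i ≠ j) (x : Fin n → S) (a : S) :
    mergeArgs φ o i j (Function.update x i a) =
      Function.update (Function.update x j o) i (φ a (x j)) := by
  rw [mergeArgs, Function.update_self, Function.update_of_ne hij.symm, Function.update_idem,
    Function.update_comm hij]

theorem mergeArgs_update_right (hij : i ≠ j) (x : Fin n → S) (a : S) :
    mergeArgs φ o i j (Function.update x j a) =
      Function.update (Function.update x j o) i (φ (x i) a) := by
  rw [mergeArgs, Function.update_self, Function.update_of_ne hij, Function.update_comm hij,
    Function.update_idem]

theorem mergeArgs_update_of_ne {t : Fin n} (hti : t ≠ i) (htj : t ≠ j) (x : Fin n → S) (a : S) :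
    mergeArgs φ o i j (Function.update x t a) = Function.update (mergeArgs φ o i j x) t a := by
  rw [mergeArgs, Function.update_of_ne hti.symm, Function.update_of_ne htj.symm,
    Function.update_comm hti, Function.update_comm htj, mergeArgs]

theorem IsNQuasigroup.comp_mergeArgs (hf : IsNQuasigroup f) (hφ : IsBinaryQG φ) (hij : i ≠ j) :
    IsNQuasigroup (f ∘ mergeArgs φ o i j) := fun t x => by
  rcases eq_or_ne t i with rfl | hti
  · simpa only [Function.comp_apply, mergeArgs_update_left hij] using! (hf t _).comp (hφ.2 (x j))
  rcases eq_or_ne t j with rfl | htj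
  · simpa only [Function.comp_apply, mergeArgs_update_right hij] using! (hf i _).comp (hφ.1 (x i))
  · simpa only [Function.comp_apply, mergeArgs_update_of_ne hti htj] using hf t _

theorem permutablyReducible_of_comp_mergeArgs (hn : 3 ≤ n) (hf : IsNQuasigroup f)
    (hφ : IsBinaryQG φ) (hij : i ≠ j) (h : f ∘ mergeArgs φ o i j = f) :
    PermutablyReducible f := by
  obtain ⟨m, rfl⟩ := Nat.exists_eq_add_of_le' hn
  obtain ⟨σ, rfl, rfl⟩ : ∃ σ : Equiv.Perm (Fin (m + 3)), σ 0 = i ∧ σ 1 = j :=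
    MulAction.is_two_pretransitive_iff.1 (Equiv.Perm.isMultiplyPretransitive _ 2) (by simp) hij
  have hι : Function.Injective (σ ∘ Fin.succAbove 1) :=
    σ.injective.comp Fin.succAbove_right_injective
  refine ⟨2, le_rfl, by omega, σ, fun v => φ (v 0) (v 1),
    PrincipalRetract f (σ ∘ Fin.succAbove 1) fun _ => o, fun t x => ?_,
    hf.principalRetract hι _, fun x => ?_⟩
  · fin_cases t
    · simpa using hφ.2 (x 1)
    · simpa using hφ.1 (x 0)
  · rw [← congrFun h x]
    refine congrArg f ((extend_eq_iff hι).2 ⟨fun a => ?_, fun t ht => ?_⟩).symm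
    · cases a using Fin.cases with
      | zero => simp [mergeArgs_apply, hij]
      | succ a =>
        have h2 : Fin.succAbove 1 a.succ = a.succ.succ := by
          rw [← Fin.succ_zero_eq_one, Fin.succ_succAbove_succ, Fin.zero_succAbove]
        have hσ : (⟨2 + a, by omega⟩ : Fin (m + 3)) = a.succ.succ := Fin.ext (Nat.add_comm 2 a)
        have h1 : a.succ.succ ≠ 1 := h2 ▸ Fin.succAbove_ne 1 a.succ
        simp [mergeArgs_apply, h1, h2, hσ]
    · obtain rfl : t = σ 1 := by
        by_contra ht1
        obtain ⟨a, ha⟩ := Fin.exists_succAbove_eq (x := σ.symm t) (y := 1)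
          (by rwa [ne_eq, Equiv.symm_apply_eq])
        exact ht ⟨a, by simp [ha]⟩
      simp [mergeArgs_apply]

theorem principalRetract_comp_mergeArgs_of_right_notMem {κ : Fin k → Fin n}
    (hκ : Function.Injective κ) (hφ : IsBinaryQG φ) (hj : j ∉ Set.range κ)
    (c : Fin n → S) : ∃ s, PrincipalRetract (f ∘ mergeArgs φ o i j) κ c =
      isotope (PrincipalRetract f κ (mergeArgs φ o i j c)) s := by
  refine ⟨fun a => if κ a = i then Equiv.ofBijective _ (hφ.2 (c j)) else 1, funext fun y => ?_⟩
  refine congrArg f ((extend_eq_iff hκ).2 ⟨fun a => ?_, fun t ht => ?_⟩).symm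
  · have haj : κ a ≠ j := fun h => hj ⟨a, h⟩
    rcases eq_or_ne (κ a) i with rfl | hai
    · simp [mergeArgs_apply, haj, hκ.extend_apply, Function.extend_apply' _ _ _ hj]
    · simp [mergeArgs_apply, haj, hai, hκ.extend_apply]
  · rcases eq_or_ne t i with rfl | hti
    · simp [mergeArgs_apply, Function.extend_apply' _ _ _ ht, Function.extend_apply' _ _ _ hj]
    · simp [mergeArgs_apply, hti, Function.extend_apply' _ _ _ ht]

theorem injective_update_of_notMem_range {κ : Fin k → Fin n} (hκ : Function.Injective κ)
    (b : Fin k) (hi : i ∉ Set.range κ) : Function.Injective (Function.update κ b i) :=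
  fun a a' h => by
  grind [Function.Injective]

theorem principalRetract_comp_mergeArgs_of_left_notMem {κ : Fin k → Fin n}
    (hκ : Function.Injective κ) (hφ : IsBinaryQG φ) (b : Fin k)
    (hi : i ∉ Set.range κ) (c : Fin n → S) :
    ∃ s, PrincipalRetract (f ∘ mergeArgs φ o i (κ b)) κ c =
      isotope (PrincipalRetract f (Function.update κ b i) (Function.update c (κ b) o)) s := by
  have hib : i ≠ κ b := fun h => hi ⟨b, h.symm⟩
  refine ⟨fun a => if a = b then Equiv.ofBijective _ (hφ.1 (c i)) else 1, funext fun y => ?_⟩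
  refine congrArg f ((extend_eq_iff (injective_update_of_notMem_range hκ b hi)).2
    ⟨fun a => ?_, fun t ht => ?_⟩).symm
  · rcases eq_or_ne a b with rfl | hab
    · simp [mergeArgs_apply, hib, hκ.extend_apply, Function.extend_apply' _ _ _ hi]
    · have hai : κ a ≠ i := fun h => hi ⟨a, h⟩
      simp [mergeArgs_apply, hab, hai, hκ.extend_apply, hκ.eq_iff]
  · rcases eq_or_ne t (κ b) with rfl | htb
    · simp [mergeArgs_apply]
    · have hti : t ≠ i := fun h => ht ⟨b, by simp [h]⟩
      have htκ : ¬∃ a, κ a = t := fun ⟨a, ha⟩ => ht ⟨a, by grind⟩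
      simp [mergeArgs_apply, htb, hti, Function.extend_apply' _ _ _ htκ]

theorem extend_mergeArgs {κ : Fin k → Fin n} (hκ : Function.Injective κ) {a b : Fin k}
    (y : Fin k → S) (c : Fin n → S) : Function.extend κ (mergeArgs φ o a b y) c =
      mergeArgs φ o (κ a) (κ b) (Function.extend κ y c) := by
  rw [mergeArgs, mergeArgs, extend_update_left hκ, extend_update_left hκ, hκ.extend_apply,
    hκ.extend_apply]

theorem RetractsReducible.comp_mergeArgs (hk : 3 ≤ k) (hf : IsNQuasigroup f)
    (hr : RetractsReducible f k) (hφ : IsBinaryQG φ) (hφo : ∀ a, φ a o = a) (hij : i ≠ j) :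
    RetractsReducible (f ∘ mergeArgs φ o i j) k := fun κ hκ c => by
  by_cases hj : j ∈ Set.range κ
  swap
  · obtain ⟨s, hs⟩ := principalRetract_comp_mergeArgs_of_right_notMem (f := f) hκ hφ hj c
    exact hs ▸ (hr _ hκ _).isotope s
  obtain ⟨b, rfl⟩ := hj
  by_cases hi : i ∈ Set.range κ
  swap
  · obtain ⟨s, hs⟩ := principalRetract_comp_mergeArgs_of_left_notMem (f := f) hκ hφ b hi c
    exact hs ▸ (hr _ (injective_update_of_notMem_range hκ b hi) _).isotope s
  obtain ⟨a, rfl⟩ := hi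
  have hab : a ≠ b := ne_of_apply_ne κ hij
  refine permutablyReducible_of_comp_mergeArgs hk ((hf.comp_mergeArgs hφ hij).principalRetract hκ c)
    hφ hab (o := o) (funext fun y => congrArg f ?_)
  rw [extend_mergeArgs hκ]
  exact mergeArgs_of_apply_right hφo (Function.update_self ..)

theorem NormalizedAt.binaryRetract_comp_mergeArgs (hf : NormalizedAt f o) (hij : i ≠ j)
    (twins : ∀ k, k ≠ i → k ≠ j → binaryRetract f o k i = binaryRetract f o k j) :
    binaryRetract (f ∘ mergeArgs (binaryRetract f o i j) o i j) o = binaryRetract f o := by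
  have hφo : ∀ a, binaryRetract f o i j a o = a := hf.binaryRetract_id_right hij
  have right (p : Fin n) : binaryRetract (f ∘ mergeArgs (binaryRetract f o i j) o i j) o p j =
      binaryRetract f o p j := by
    funext a b
    rw [binaryRetract, Function.comp_apply, mergeArgs_update_right hij]
    rcases eq_or_ne p j with rfl | hpj
    · rw [Function.update_of_ne hij, hf.binaryRetract_id_left, Function.update_idem,
        Function.update_eq_self p fun _ => o, hf, binaryRetract, Function.update_idem, hf]
    rw [Function.update_eq_self_iff.2 (Function.update_of_ne hpj.symm _ _).symm]
    rcases eq_or_ne p i with rfl | hpi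
    · rw [Function.update_self, Function.update_idem, hf]
    · rw [Function.update_of_ne hpi.symm, hf.binaryRetract_id_left, ← twins p hpi hpj,
        binaryRetract]
  funext p q a b
  rcases eq_or_ne q j with rfl | hqj
  · rw [right]
  rcases eq_or_ne p j with rfl | hpj
  · rw [binaryRetract_swap _ o hqj.symm, right, binaryRetract_swap f o hqj]
  · exact congrArg f (mergeArgs_of_apply_right hφo (by
      rw [Function.update_of_ne hqj.symm, Function.update_of_ne hpj.symm]))

end Merging

section SymbolicUltrametric

/-- A symbolic ultrametric (Böcker–Dress): an edge colouring of the complete graph on `V` with no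
rainbow triangle and no four vertices on which it has exactly two colours, each forming a path.
The values on the diagonal are irrelevant. -/
structure IsSymbolicUltrametric {V C : Type*} (μ : V → V → C) : Prop where
  symm : ∀ x y, μ x y = μ y x
  triangle : ∀ x y z, [x, y, z].Nodup → μ x y = μ x z ∨ μ x y = μ y z ∨ μ x z = μ y z
  path : ∀ x y z w, [x, y, z, w].Nodup → μ x y = μ y z → μ y z = μ z w → μ y w = μ w x →
    μ w x = μ x z → μ x y = μ y w

/-- `i` and `j` are distinct elements of `U` which no other element of `U` tells apart. -/
structure AreTwinsIn {V C : Type*} (μ : V → V → C) (U : Finset V) (i j : V) : Prop where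
  mem_left : i ∈ U
  mem_right : j ∈ U
  ne : i ≠ j
  eq : ∀ k ∈ U, k ≠ i → k ≠ j → μ k i = μ k j

namespace AreTwinsIn

variable {V C : Type*} {μ : V → V → C} {U W : Finset V} {i j : V}

theorem symm (h : AreTwinsIn μ U i j) : AreTwinsIn μ U j i :=
  ⟨h.mem_right, h.mem_left, h.ne.symm, fun k hk hkj hki => (h.eq k hk hki hkj).symm⟩

theorem mono (h : AreTwinsIn μ W i j) (hWU : W ⊆ U) (hU : ∀ k ∈ U, k ∉ W → μ k i = μ k j) :
    AreTwinsIn μ U i j :=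
  ⟨hWU h.mem_left, hWU h.mem_right, h.ne, fun k hk hki hkj =>
    (em (k ∈ W)).elim (fun hkW => h.eq k hkW hki hkj) (hU k hk)⟩

end AreTwinsIn

namespace IsSymbolicUltrametric

variable {V C : Type*} {μ : V → V → C} {i j k l v : V}

theorem apply_eq_and_apply_eq_of_ne (h : IsSymbolicUltrametric μ) (hd : [i, j, v, k].Nodup)
    (hij : μ i j = μ v j) (hvi : μ v i ≠ μ v j) (hk : μ k i = μ k j) (hkv : μ k v ≠ μ k i) :
    μ k i = μ v j ∧ μ k v = μ v i := by
  -- The alternative is that `i j v k` and `j k i v` are monochromatic paths.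
  have path := h.path i j v k hd
  have tri := h.triangle v k i (by grind)
  have tri' := h.triangle v k j (by grind)
  grind [h.symm]

theorem apply_eq_of_apply_eq (h : IsSymbolicUltrametric μ) (hd : [i, j, v, k, l].Nodup)
    (hvi : μ v i ≠ μ v j) (hki : μ k i = μ v j) (hkj : μ k j = μ v j) (hkv : μ k v = μ v i)
    (hl : μ l i = μ l j) (hlv : μ l i = μ l v) : μ l k = μ l i := by
  -- The alternatives are monochromatic `l k j v`, `k v l j` and `k i l v`, `i v k l`.
  have path := h.path l k j v (by grind)
  have path' := h.path k i l v (by grind)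
  have tri := h.triangle k l i (by grind)
  have tri' := h.triangle k l v (by grind)
  grind [h.symm]

theorem exists_areTwinsIn_of_ne [DecidableEq V] {U : Finset V} (h : IsSymbolicUltrametric μ)
    (hvU : v ∈ U) (hij : AreTwinsIn μ (U.erase v) i j) (hμij : μ i j = μ v j)
    (hvi : μ v i ≠ μ v j) (ih : ∀ W ⊂ U, 2 ≤ W.card → ∃ i j, AreTwinsIn μ W i j) :
    ∃ i j, AreTwinsIn μ U i j := by
  classical
  obtain ⟨hi, hj, hne, twins⟩ := hij
  obtain ⟨hiv, hiU⟩ := Finset.mem_erase.1 hi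
  obtain ⟨hjv, hjU⟩ := Finset.mem_erase.1 hj
  -- `W` is a module: no element of `U` outside `W` tells two elements of `W` apart.
  let W := U.filter fun k => k = i ∨ k ≠ v ∧ k ≠ j ∧ μ k v ≠ μ k i
  have hiW : i ∈ W := by grind
  have hW : ∀ k ∈ W, k ≠ v ∧ k ≠ j ∧ μ k j = μ v j ∧ μ k v = μ v i ∧ (k ≠ i → μ k i = μ v j) := by
    intro k hk
    rcases eq_or_ne k i with rfl | hki
    · exact ⟨hiv, hne, hμij, h.symm _ _, fun h => (h rfl).elim⟩
    · obtain ⟨hkv, hkj, hne⟩ : k ≠ v ∧ k ≠ j ∧ μ k v ≠ μ k i := by grind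
      have := h.apply_eq_and_apply_eq_of_ne (k := k) (by grind) hμij hvi (by grind) hne
      grind
  rcases (Finset.one_le_card.2 ⟨i, hiW⟩).eq_or_lt with hW1 | hW2
  · obtain ⟨w, hw⟩ := Finset.card_eq_one.1 hW1.symm
    refine ⟨v, i, hvU, hiU, hiv.symm, fun k hk hkv hki => ?_⟩
    rcases eq_or_ne k j with rfl | hkj
    · rw [h.symm k, h.symm k, hμij]
    · by_contra hne
      have : k ∈ W := by grind
      grind
  · obtain ⟨a, b, hab⟩ := ih W (Finset.filter_ssubset.2 ⟨v, hvU, by grind⟩) hW2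
    refine ⟨a, b, hab.mono (Finset.filter_subset _ _) fun l hl hlW => ?_⟩
    suffices ∀ k ∈ W, μ l k = μ l i from
      (this a hab.mem_left).trans (this b hab.mem_right).symm
    intro k hk
    obtain ⟨hkv, hkj, hμkj, hμkv, hμki⟩ := hW k hk
    rcases eq_or_ne k i with rfl | hki
    · rfl
    rcases eq_or_ne l v with rfl | hlv
    · rw [h.symm, hμkv]
    rcases eq_or_ne l j with rfl | hlj
    · rw [h.symm l k, hμkj, h.symm l i, hμij]
    · exact h.apply_eq_of_apply_eq (by grind) hvi (hμki hki) hμkj hμkv (by grind) (by grind)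

theorem exists_areTwinsIn (h : IsSymbolicUltrametric μ) (U : Finset V) (hU : 2 ≤ U.card) :
    ∃ i j, AreTwinsIn μ U i j := by
  classical
  induction U using Finset.strongInduction with
  | H U ih =>
  rcases hU.eq_or_lt with hU2 | hU3
  · obtain ⟨i, j, hij, rfl⟩ := Finset.card_eq_two.1 hU2.symm
    exact ⟨i, j, by simp, by simp, hij, by grind⟩
  obtain ⟨v, hv⟩ : U.Nonempty := Finset.card_pos.1 (by omega)
  obtain ⟨i, j, hij⟩ := ih _ (Finset.erase_ssubset hv)
    (by rw [Finset.card_erase_of_mem hv]; omega)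
  by_cases hvij : μ v i = μ v j
  · exact ⟨i, j, hij.mono (Finset.erase_subset _ _) (by grind)⟩
  rcases h.triangle v i j (by grind [hij.mem_left, hij.mem_right, hij.ne]) with hij' | hij' | hij'
  · exact absurd hij' hvij
  · exact h.exists_areTwinsIn_of_ne hv hij.symm (by rw [h.symm, hij']) (Ne.symm hvij) ih
  · exact h.exists_areTwinsIn_of_ne hv hij hij'.symm hvij ih

end IsSymbolicUltrametric

end SymbolicUltrametric

section Reducibility

variable {n k : ℕ} {S : Type*} {f : (Fin n → S) → S} {o : S} {ι : Fin k → Fin n}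

theorem NormalizedAt.principalRetract (hf : NormalizedAt f o) (hι : Function.Injective ι) :
    NormalizedAt (PrincipalRetract f ι fun _ => o) o := fun i a => by
  rw [PrincipalRetract, extend_update_left hι, Function.extend_const, hf]

theorem binaryRetract_principalRetract (f : (Fin n → S) → S) (o : S) (hι : Function.Injective ι)
    (i j : Fin k) : binaryRetract (PrincipalRetract f ι fun _ => o) o i j =
      binaryRetract f o (ι i) (ι j) := by
  funext a b
  rw [binaryRetract, PrincipalRetract, extend_update_left hι, extend_update_left hι,
    Function.extend_const, binaryRetract]

theorem RetractsReducible.exists_binaryRetract_eq (hr : RetractsReducible f k)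
    (hf : NormalizedAt f o) (hι : Function.Injective ι) :
    ∃ A : Finset (Fin k), 2 ≤ A.card ∧ A.card ≤ k - 1 ∧ ∀ a ∈ A, ∀ b ∈ A, ∀ c ∉ A,
      binaryRetract f o (ι a) (ι c) = binaryRetract f o (ι b) (ι c) := by
  obtain ⟨A, hA2, hAk, hA⟩ := (hr ι hι fun _ => o).exists_isBlock
  refine ⟨A, hA2, hAk, fun a ha b hb c hc => ?_⟩
  simpa only [binaryRetract_principalRetract f o hι] using
    hA.binaryRetract_eq (hf.principalRetract hι) ha hb hc

theorem NormalizedAt.isSymbolicUltrametric [Finite S] (hS : Nat.card S ≤ 4)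
    (hfo : NormalizedAt f o) (hf : IsNQuasigroup f) (h3 : RetractsReducible f 3)
    (h4 : RetractsReducible f 4) : IsSymbolicUltrametric (binaryRetract f o) where
  symm := hfo.binaryRetract_symm hS hf
  triangle x y z hd := by
    have symm := hfo.binaryRetract_symm hS hf
    have hι : Function.Injective ![x, y, z] := by simpa [← List.nodup_ofFn] using hd
    obtain ⟨A, hA2, hA3, hA⟩ := h3.exists_binaryRetract_eq hfo hι
    have hA' : A = {0, 1} ∨ A = {0, 2} ∨ A = {1, 2} := by
      clear hA
      revert A
      decide
    rcases hA' with rfl | rfl | rfl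
    · exact .inr (.inr (hA 0 (by simp) 1 (by simp) 2 (by simp)))
    · exact .inr (.inl ((hA 0 (by simp) 2 (by simp) 1 (by simp)).trans (symm z y)))
    · exact .inl ((symm x y).trans ((hA 1 (by simp) 2 (by simp) 0 (by simp)).trans (symm z x)))
  path x y z w hd hxy hyz hyw hwx := by
    have symm := hfo.binaryRetract_symm hS hf
    have hι : Function.Injective ![x, y, z, w] := by simpa [← List.nodup_ofFn] using hd
    obtain ⟨A, hA2, hA4, hA⟩ := h4.exists_binaryRetract_eq hfo hι
    obtain ⟨a, ha, b, hb, c, hc, hac, hbc⟩ : ∃ a ∈ A, ∃ b ∈ A, ∃ c ∉ A,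
        (a.val + 1 = c ∨ c.val + 1 = a) ∧ ¬(b.val + 1 = c ∨ c.val + 1 = b) := by
      clear hA
      revert A
      decide
    have adj : ∀ s t : Fin 4, (s.val + 1 = t ∨ t.val + 1 = s) →
        binaryRetract f o (![x, y, z, w] s) (![x, y, z, w] t) = binaryRetract f o x y := by
      intro s t hst
      fin_cases s <;> fin_cases t <;> simp_all
    have nonadj : ∀ s t : Fin 4, s ≠ t → ¬(s.val + 1 = t ∨ t.val + 1 = s) →
        binaryRetract f o (![x, y, z, w] s) (![x, y, z, w] t) = binaryRetract f o y w := by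
      intro s t hne hst
      fin_cases s <;> fin_cases t <;> simp_all
    exact (adj a c hac).symm.trans
      ((hA a ha b hb c hc).trans (nonadj b c (ne_of_mem_of_not_mem hb hc) hbc))

theorem NormalizedAt.permutablyReducible [Finite S] (hS : Nat.card S ≤ 4) (hn : 3 ≤ n)
    (hfo : NormalizedAt f o) (hf : IsNQuasigroup f) (h3 : RetractsReducible f 3)
    (h4 : RetractsReducible f 4) : PermutablyReducible f := by
  obtain ⟨i, j, -, -, hij, twins⟩ :=
    (hfo.isSymbolicUltrametric hS hf h3 h4).exists_areTwinsIn Finset.univ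
      (by rw [Finset.card_fin]; omega)
  have loop := hfo.isLoop_binaryRetract hf hij
  refine permutablyReducible_of_comp_mergeArgs hn hf loop.isBinaryQG hij
    (eq_of_binaryRetract_eq (o := o) hS (by omega) (hf.comp_mergeArgs loop.isBinaryQG hij)
      (h3.comp_mergeArgs le_rfl hf loop.isBinaryQG loop.id_right hij) h3 ?_)
  exact hfo.binaryRetract_comp_mergeArgs hij fun k hki hkj => twins k (Finset.mem_univ k) hki hkj

theorem permutablyReducible_of_retractsReducible [Finite S] [Nonempty S] (hS : Nat.card S ≤ 4)
    (hn : 3 ≤ n) (hf : IsNQuasigroup f) (h3 : RetractsReducible f 3)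
    (h4 : RetractsReducible f 4) : PermutablyReducible f := by
  obtain ⟨s, -, hs⟩ := hf.exists_normalizedAt_isotope (Classical.arbitrary S)
  have hfs : isotope (isotope f s) (fun i => (s i).symm) = f := by
    funext x
    simp only [isotope, Equiv.apply_symm_apply]
  exact hfs ▸ (hs.permutablyReducible hS hn (hf.isotope s) (h3.isotope s) (h4.isotope s)).isotope _

end Reducibility

theorem stmt11_general {n : ℕ} {S : Type*} [Finite S] [Nonempty S] (hS : Nat.card S ≤ 4)
    (hn : 3 ≤ n) {f : (Fin n → S) → S} (hf : IsNQuasigroup f) (h3 : RetractsReducible f 3)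
    (h4 : RetractsReducible f 4) :
    PermutablyReducible f ∧ ∀ k, 3 ≤ k → RetractsReducible f k :=
  ⟨permutablyReducible_of_retractsReducible hS hn hf h3 h4, fun _ hk _ hι c =>
    permutablyReducible_of_retractsReducible hS hk (hf.principalRetract hι c)
      (h3.principalRetract hι c) (h4.principalRetract hι c)⟩

/-- Lemma 3.1: if all principal 3- and 4-retracts of an
`n`-quasigroup of order 4 (`n ≥ 5`) are permutably reducible, then it is
completely reducible. -/
theorem stmt11 {n : ℕ} (hn : 5 ≤ n) (f : (Fin n → Fin 4) → Fin 4)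
    (hq : IsNQuasigroup f)
    (h3 : ∀ (ι : Fin 3 → Fin n), Function.Injective ι →
      ∀ c : Fin n → Fin 4, PermutablyReducible (PrincipalRetract f ι c))
    (h4 : ∀ (ι : Fin 4 → Fin n), Function.Injective ι →
      ∀ c : Fin n → Fin 4, PermutablyReducible (PrincipalRetract f ι c)) :
    CompletelyReducible f :=
  (stmt11_general (by simp) (by omega) hq h3 h4).imp_right fun h k hk _ => h k hk
end

section
/- Let D be a permutably reducible n-quasigroup (n ≥ 3) of arbitrary order that has a permutably irreducible (n−1)-retract F given by F⟨x₀,…,x_{n−1}⟩ = D⟨x₀,…,x_{n−1},0⟩. Then there exist an index i ∈ {0,…,n−1} and a binary quasigroup h with h(x,0) = x for all x, such that D⟨x₀,…,xₙ⟩ = F⟨x₀,…,x_{i−1}, h(xᵢ,xₙ), x_{i+1},…,x_{n−1}⟩. -/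
/-!
The argument is symmetric in all the variables of a quasigroup predicate, including the value.
Reducibility of `D` means that its predicate can be written `G(z) = H(z)`, where `G` is a quasigroup
in a set `A` of at least two variables and `H` is a quasigroup in the others, again at least two.
Exchanging `G` and `H`, let the variable `zₙ` that the retract fixes belong to `A`. Fixing `zₙ`
leaves a splitting over `A \ {n}`, so irreducibility of the retract forces `A = {i, n}`. Hence `G`
is essentially a binary quasigroup, and solving `G(h(p, q), 0) = G(p, q)` for `h(p, q)` absorbs `zₙ`
into `zᵢ`.
-/

open Function Set

section IsQuasigroupOn

variable {ι κ S : Type*} [DecidableEq ι] [DecidableEq κ]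

/-- `f` is a quasigroup in the variables indexed by `A` and ignores the others. Keeping all the
variables as arguments avoids reindexing when `A` changes. -/
structure IsQuasigroupOn (A : Set ι) (f : (ι → S) → S) : Prop where
  dependsOn : DependsOn f A
  bijective_update : ∀ i ∈ A, ∀ x, Bijective fun a => f (update x i a)

theorem isQuasigroupOn_univ_iff {n : ℕ} {f : (Fin n → S) → S} :
    IsQuasigroupOn univ f ↔ IsNQuasigroup f :=
  ⟨fun hf i => hf.bijective_update i (mem_univ i), fun hf => ⟨dependsOn_univ f, fun i _ => hf i⟩⟩

theorem IsQuasigroupOn.comp_right {A : Set κ} {f : (κ → S) → S} (hf : IsQuasigroupOn A f)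
    {e : κ → ι} (he : Injective e) : IsQuasigroupOn (e '' A) fun x => f (x ∘ e) where
  dependsOn _ _ hxy := hf.dependsOn fun _ hj => hxy _ (mem_image_of_mem e hj)
  bijective_update := by
    rintro _ ⟨j, hj, rfl⟩ x
    simpa only [update_comp_eq_of_injective x he] using hf.bijective_update j hj (x ∘ e)

theorem extend_update_eq_update_extend {e : κ → ι} (he : Injective e) (y : κ → S) (c : ι → S)
    (j : κ) (a : S) : extend e (update y j a) c = update (extend e y c) (e j) a := by
  refine eq_update_iff.2 ⟨by rw [he.extend_apply, update_self], fun i hi => ?_⟩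
  by_cases hmem : ∃ k, e k = i
  · obtain ⟨k, rfl⟩ := hmem
    rw [he.extend_apply, he.extend_apply, update_of_ne fun hk => hi (congrArg e hk)]
  · rw [extend_apply' _ _ _ hmem, extend_apply' _ _ _ hmem]

theorem IsQuasigroupOn.comp_extend {A : Set ι} {f : (ι → S) → S} (hf : IsQuasigroupOn A f)
    {e : κ → ι} (he : Injective e) (c : ι → S) :
    IsQuasigroupOn (e ⁻¹' A) fun y => f (extend e y c) where
  dependsOn x y hxy := hf.dependsOn fun i hi => by
    by_cases hmem : ∃ k, e k = i
    · obtain ⟨k, rfl⟩ := hmem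
      rw [he.extend_apply, he.extend_apply, hxy k hi]
    · rw [extend_apply' _ _ _ hmem, extend_apply' _ _ _ hmem]
  bijective_update j hj y := by
    simpa only [extend_update_eq_update_extend he] using hf.bijective_update (e j) hj _

theorem isQuasigroupOn_range_iff [Nonempty S] {n : ℕ} {e : Fin n → ι} (he : Injective e)
    {f : (ι → S) → S} :
    IsQuasigroupOn (range e) f ↔ ∃ g, IsNQuasigroup g ∧ ∀ x, f x = g (x ∘ e) := by
  constructor
  · intro hf
    obtain ⟨o⟩ := ‹Nonempty S›
    refine ⟨fun y => f (extend e y fun _ => o), ?_, fun x => hf.dependsOn ?_⟩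
    · rw [← isQuasigroupOn_univ_iff, ← preimage_range e]
      exact hf.comp_extend he _
    · rintro _ ⟨j, rfl⟩
      rw [he.extend_apply, comp_apply]
  · rintro ⟨g, hg, hfg⟩
    rw [funext hfg, ← image_univ]
    exact (isQuasigroupOn_univ_iff.2 hg).comp_right he

theorem IsQuasigroupOn.isBinaryQG_update {i j : ι} (hij : i ≠ j) {f : (ι → S) → S}
    (hf : IsQuasigroupOn {i, j} f) (c : ι → S) :
    IsBinaryQG fun p q => f (update (update c i p) j q) := by
  refine ⟨fun p => hf.bijective_update j (by simp) _, fun q => ?_⟩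
  simpa only [update_comm hij] using hf.bijective_update i (by simp) (update c j q)

end IsQuasigroupOn

theorem IsBinaryQG.exists_right_unital {S : Type*} {f : S → S → S} (hf : IsBinaryQG f) (o : S) :
    ∃ h : S → S → S, IsBinaryQG h ∧ (∀ x, h x o = x) ∧ ∀ p q, f (h p q) o = f p q := by
  let e := Equiv.ofBijective _ (hf.2 o)
  exact ⟨fun p q => e.symm (f p q),
    ⟨fun p => e.symm.bijective.comp (hf.1 p), fun q => e.symm.bijective.comp (hf.2 q)⟩,
    e.symm_apply_apply, fun p q => e.apply_symm_apply (f p q)⟩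

theorem IsNQuasigroup.exists_inverse_zero {n : ℕ} {S : Type*} {f : (Fin (n + 1) → S) → S}
    (hf : IsNQuasigroup f) :
    ∃ f' : (Fin (n + 1) → S) → S, IsNQuasigroup f' ∧
      ∀ a b y, f' (Fin.cons b y) = a ↔ f (Fin.cons a y) = b := by
  have bijective_cons (y : Fin n → S) : Bijective fun a => f (Fin.cons a y) := by
    rw [bijective_iff_existsUnique]
    intro b
    simpa only [Fin.update_cons_zero] using (hf 0 (Fin.cons b y)).existsUnique b
  let e (y : Fin n → S) : S ≃ S := Equiv.ofBijective _ (bijective_cons y)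
  have e_symm_eq_iff (a b : S) (y : Fin n → S) : (e y).symm b = a ↔ f (Fin.cons a y) = b :=
    (e y).symm_apply_eq.trans eq_comm
  refine ⟨fun v => (e (Fin.tail v)).symm (v 0), fun i v => ?_, e_symm_eq_iff⟩
  cases i using Fin.cases with
  | zero => simpa only [Fin.tail_update_zero, update_self] using (e (Fin.tail v)).symm.bijective
  | succ j =>
    rw [bijective_iff_existsUnique]
    intro a
    simp only [Fin.tail_update_succ, update_of_ne (Fin.succ_ne_zero j).symm, e_symm_eq_iff,
      Fin.cons_update]
    exact (hf j.succ _).existsUnique _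

section SplitsOver

variable {ι κ S : Type*} [DecidableEq ι] [DecidableEq κ]

/-- `P` is equivalent to an equation between a quasigroup in the variables indexed by `A` and a
quasigroup in the remaining variables. This form of reducibility is symmetric in `A` and `Aᶜ`. -/
def SplitsOver (P : (ι → S) → Prop) (A : Set ι) : Prop :=
  ∃ G H, IsQuasigroupOn A G ∧ IsQuasigroupOn Aᶜ H ∧ ∀ z, P z ↔ G z = H z

theorem SplitsOver.compl {P : (ι → S) → Prop} {A : Set ι} (hP : SplitsOver P A) :
    SplitsOver P Aᶜ := by
  obtain ⟨G, H, hG, hH, hGH⟩ := hP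
  exact ⟨H, G, hH, (compl_compl A).symm ▸ hG, fun z => (hGH z).trans eq_comm⟩

theorem SplitsOver.comp_extend {P : (ι → S) → Prop} {A : Set ι} (hP : SplitsOver P A)
    {e : κ → ι} (he : Injective e) (c : ι → S) :
    SplitsOver (fun y => P (extend e y c)) (e ⁻¹' A) := by
  obtain ⟨G, H, hG, hH, hGH⟩ := hP
  exact ⟨_, _, hG.comp_extend he c, hH.comp_extend he c, fun y => hGH _⟩

theorem SplitsOver.exists_right_unital {P : (ι → S) → Prop} {i j : ι} (hij : i ≠ j)
    (hP : SplitsOver P {i, j}) (o : S) :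
    ∃ h : S → S → S, IsBinaryQG h ∧ (∀ x, h x o = x) ∧
      ∀ z, P z ↔ P (update (update z i (h (z i) (z j))) j o) := by
  obtain ⟨G, H, hG, hH, hGH⟩ := hP
  let B (p q : S) : S := G (update (update (fun _ => o) i p) j q)
  have G_update (z : ι → S) (p q : S) : G (update (update z i p) j q) = B p q :=
    hG.dependsOn fun k hk => by
      rcases hk with rfl | rfl
      · simp only [update_of_ne hij, update_self]
      · simp only [update_self]
  obtain ⟨h, hh, hho, hB⟩ := (hG.isBinaryQG_update hij fun _ => o).exists_right_unital o
  refine ⟨h, hh, hho, fun z => ?_⟩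
  have G_eq : G (update (update z i (h (z i) (z j))) j o) = G z :=
    calc
      _ = B (h (z i) (z j)) o := G_update z _ _
      _ = B (z i) (z j) := hB _ _
      _ = G (update (update z i (z i)) j (z j)) := (G_update z _ _).symm
      _ = G z := by rw [update_eq_self, update_eq_self]
  have H_eq : H (update (update z i (h (z i) (z j))) j o) = H z :=
    hH.dependsOn fun k hk => by
      rw [update_of_ne fun hkj => hk (.inr hkj), update_of_ne fun hki => hk (.inl hki)]
  rw [hGH, hGH, G_eq, H_eq]

end SplitsOver

section GraphPredicate

variable {n : ℕ} {S : Type*}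

/-- The quasigroup predicate `f⟨z₀, …, zₙ⟩`, in which the value `z₀` of `f` becomes a variable on
the same footing as the arguments. -/
def GraphPredicate (f : (Fin n → S) → S) (z : Fin (n + 1) → S) : Prop :=
  z 0 = f (Fin.tail z)

theorem splitsOver_graphPredicate_range_iff [Nonempty S] {k l : ℕ} {f : (Fin n → S) → S}
    {e₁ : Fin k → Fin n} {e₂ : Fin l → Fin n} (he₁ : Injective e₁) (he₂ : Injective e₂)
    (hcompl : (range e₁)ᶜ = range e₂) :
    SplitsOver (GraphPredicate f) (range (Fin.succ ∘ e₁)) ↔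
      ∃ g h, IsNQuasigroup g ∧ IsNQuasigroup h ∧
        ∀ x, f x = h (Fin.cons (g (x ∘ e₁)) (x ∘ e₂)) := by
  let e₀ : Fin (l + 1) → Fin (n + 1) := Fin.cons 0 (Fin.succ ∘ e₂)
  have he₀ : Injective e₀ := by
    rw [Fin.cons_injective_iff]
    exact ⟨by simp [Fin.succ_ne_zero], (Fin.succ_injective n).comp he₂⟩
  have compl_range : (range (Fin.succ ∘ e₁))ᶜ = range e₀ := by
    rw [Fin.range_cons, range_comp, range_comp, ← hcompl]
    ext i
    cases i using Fin.cases <;> simp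
  have comp_e₀ (z : Fin (n + 1) → S) : z ∘ e₀ = Fin.cons (z 0) (Fin.tail z ∘ e₂) := by
    funext j
    cases j using Fin.cases <;> rfl
  simp only [SplitsOver, compl_range, isQuasigroupOn_range_iff ((Fin.succ_injective n).comp he₁),
    isQuasigroupOn_range_iff he₀]
  constructor
  · rintro ⟨G, H, ⟨g, hg, hG⟩, ⟨h, hh, hH⟩, hGH⟩
    obtain ⟨h', hh', hinv⟩ := hh.exists_inverse_zero
    refine ⟨g, h', hg, hh', fun x => ((hinv _ _ _).2 ?_).symm⟩
    have hz := (hGH (Fin.cons (f x) x)).1 rfl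
    rw [hG, hH, comp_e₀] at hz
    exact hz.symm
  · rintro ⟨g, h, hg, hh, hf⟩
    obtain ⟨h', hh', hinv⟩ := hh.exists_inverse_zero
    refine ⟨_, _, ⟨g, hg, fun _ => rfl⟩, ⟨h', hh', fun _ => rfl⟩, fun z => ?_⟩
    rw [GraphPredicate, hf, comp_e₀, eq_comm, ← hinv, eq_comm]
    rfl

theorem compl_range_perm_comp_castLE {k : ℕ} (hk : k ≤ n) (σ : Equiv.Perm (Fin n)) :
    (range (σ ∘ Fin.castLE hk))ᶜ = range fun j : Fin (n - k) => σ ⟨k + j, by omega⟩ := by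
  rw [range_comp, ← image_compl_eq σ.bijective, Fin.range_castLE, range_comp']
  congr 1
  ext i
  simp only [mem_compl_iff, mem_ofPred_eq, not_lt, mem_range, Fin.ext_iff]
  exact ⟨fun hi => ⟨⟨i - k, by omega⟩, Nat.add_sub_of_le hi⟩, fun ⟨j, hj⟩ => by omega⟩

theorem exists_perm_range_comp_castLE_eq {k : ℕ} (hk : k ≤ n) {A : Set (Fin n)}
    (hA : A.ncard = k) : ∃ σ : Equiv.Perm (Fin n), range (σ ∘ Fin.castLE hk) = A := by
  let e : Fin k ≃ A := (Finite.equivFinOfCardEq hA).symm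
  obtain ⟨σ, hσ⟩ := Equiv.Perm.exists_extending_pair (Fin.castLE hk) (Subtype.val ∘ e)
    (Fin.castLE_injective hk) (Subtype.val_injective.comp e.injective)
  refine ⟨σ, ?_⟩
  rw [show σ ∘ Fin.castLE hk = Subtype.val ∘ e from funext hσ, e.surjective.range_comp,
    Subtype.range_val]

theorem permutablyReducible_iff_exists_perm [Nonempty S] {f : (Fin n → S) → S} :
    PermutablyReducible f ↔ ∃ (k : ℕ) (hk : k ≤ n) (σ : Equiv.Perm (Fin n)), 2 ≤ k ∧ k < n ∧
      SplitsOver (GraphPredicate f) (range (Fin.succ ∘ σ ∘ Fin.castLE hk)) := by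
  have splitsOver_iff {k : ℕ} (hk : k ≤ n) (σ : Equiv.Perm (Fin n)) :=
    splitsOver_graphPredicate_range_iff (f := f) (σ.injective.comp (Fin.castLE_injective hk))
      (σ.injective.comp fun i j hij => by simpa [Fin.ext_iff] using hij)
      (compl_range_perm_comp_castLE hk σ)
  constructor
  · rintro ⟨k, hk, hkn, σ, hf⟩
    exact ⟨k, by omega, σ, hk, by omega, (splitsOver_iff _ σ).2 hf⟩
  · rintro ⟨k, hkn, σ, hk, hlt, hf⟩
    exact ⟨k, hk, by omega, σ, (splitsOver_iff hkn σ).1 hf⟩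

theorem permutablyReducible_iff_exists_splitsOver [Nonempty S] {f : (Fin n → S) → S} :
    PermutablyReducible f ↔
      ∃ A : Set (Fin (n + 1)), 2 ≤ A.ncard ∧ 2 ≤ Aᶜ.ncard ∧ SplitsOver (GraphPredicate f) A := by
  rw [permutablyReducible_iff_exists_perm]
  constructor
  · rintro ⟨k, hkn, σ, hk, hlt, hf⟩
    have hcard : (range (Fin.succ ∘ σ ∘ Fin.castLE hkn)).ncard = k := by
      rw [ncard_range_of_injective ((Fin.succ_injective n).comp
        (σ.injective.comp (Fin.castLE_injective hkn))), Nat.card_fin]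
    have hadd := ncard_add_ncard_compl (range (Fin.succ ∘ σ ∘ Fin.castLE hkn))
    rw [Nat.card_fin] at hadd
    exact ⟨_, by omega, by omega, hf⟩
  · rintro ⟨A, hA, hAc, hf⟩
    wlog h0 : 0 ∉ A generalizing A
    · exact this Aᶜ hAc (by rwa [compl_compl]) hf.compl fun h => h (not_not.1 h0)
    have subset_range : A ⊆ range Fin.succ := by
      rw [Fin.range_succ]
      exact fun i hi => ne_of_mem_of_not_mem hi h0
    have hcard : (Fin.succ ⁻¹' A).ncard = A.ncard :=
      ncard_preimage_of_injective_subset_range (Fin.succ_injective n) subset_range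
    have hadd := ncard_add_ncard_compl A
    rw [Nat.card_fin] at hadd
    have hle : A.ncard ≤ n := by omega
    obtain ⟨σ, hσ⟩ := exists_perm_range_comp_castLE_eq hle hcard
    refine ⟨A.ncard, hle, σ, hA, by omega, ?_⟩
    rwa [range_comp, hσ, image_preimage_eq_of_subset subset_range]

end GraphPredicate

section LastVariable

variable {n : ℕ} {S : Type*}

theorem extend_castSucc_const_eq_snoc (y : Fin n → S) (o : S) :
    extend Fin.castSucc y (fun _ => o) = (Fin.snoc y o : Fin (n + 1) → S) := by
  funext i
  cases i using Fin.lastCases with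
  | last =>
    rw [Fin.snoc_last, extend_apply' _ _ _ fun ⟨j, hj⟩ => Fin.castSucc_ne_last j hj]
  | cast j => rw [Fin.snoc_castSucc, (Fin.castSucc_injective n).extend_apply]

theorem SplitsOver.snoc {P : (Fin (n + 1) → S) → Prop} {A : Set (Fin (n + 1))}
    (hP : SplitsOver P A) (o : S) :
    SplitsOver (fun y => P (Fin.snoc y o)) (Fin.castSucc ⁻¹' A) := by
  simpa only [extend_castSucc_const_eq_snoc] using
    hP.comp_extend (Fin.castSucc_injective n) fun _ => o

theorem update_last_eq_snoc_init (z : Fin (n + 1) → S) (o : S) :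
    update z (Fin.last n) o = Fin.snoc (Fin.init z) o := by
  conv_lhs => rw [← Fin.snoc_init_self z, Fin.update_snoc_last]

theorem graphPredicate_snoc {f : (Fin (n + 1) → S) → S} (y : Fin (n + 1) → S) (o : S) :
    GraphPredicate f (Fin.snoc y o) ↔ GraphPredicate (fun x => f (Fin.snoc x o)) y := by
  rw [← Fin.cons_self_tail y, ← Fin.cons_snoc_eq_snoc_cons]
  rfl

theorem eq_insert_last_image_castSucc {A : Set (Fin (n + 1))} (hA : Fin.last n ∈ A) :
    A = insert (Fin.last n) (Fin.castSucc '' (Fin.castSucc ⁻¹' A)) := by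
  ext i
  cases i using Fin.lastCases <;> simp [hA, Fin.castSucc_ne_last]

theorem exists_splitsOver_castSucc_last [Nonempty S] {f : (Fin (n + 1) → S) → S}
    (hf : PermutablyReducible f) {o : S}
    (hirr : ¬ PermutablyReducible fun y : Fin n → S => f (Fin.snoc y o)) :
    ∃ i : Fin (n + 1), SplitsOver (GraphPredicate f) {i.castSucc, Fin.last (n + 1)} := by
  rw [permutablyReducible_iff_exists_splitsOver] at hf hirr
  obtain ⟨A, hA, hAc, hs⟩ := hf
  wlog hlast : Fin.last (n + 1) ∈ A generalizing A
  · exact this Aᶜ hAc (by rwa [compl_compl]) hs.compl hlast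
  have A_eq := eq_insert_last_image_castSucc hlast
  set B : Set (Fin (n + 1)) := Fin.castSucc ⁻¹' A with B_eq
  have card_compl : Bᶜ.ncard = Aᶜ.ncard := by
    rw [B_eq, ← preimage_compl]
    refine ncard_preimage_of_injective_subset_range (Fin.castSucc_injective _) fun i hi => ?_
    exact Fin.exists_castSucc_eq.2 fun h => hi (h ▸ hlast)
  have retract_splits : SplitsOver (GraphPredicate fun y : Fin n → S => f (Fin.snoc y o)) B := by
    simpa only [graphPredicate_snoc] using hs.snoc o
  have card_lt : B.ncard < 2 := by
    by_contra! h
    exact hirr ⟨B, h, card_compl ▸ hAc, retract_splits⟩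
  have le_card : A.ncard ≤ B.ncard + 1 := by
    rw [A_eq, ← ncard_image_of_injective B (Fin.castSucc_injective _)]
    exact ncard_insert_le _ _
  obtain ⟨i, hi⟩ := ncard_eq_one.1 (show B.ncard = 1 by omega)
  refine ⟨i, ?_⟩
  rwa [A_eq, hi, image_singleton, pair_comm] at hs

end LastVariable

/-- Proposition 4.1: a permutably reducible `(m+1)`-quasigroup `D`
(`m+1 ≥ 3`, arbitrary order, with distinguished element `o` playing the role of
`0`) with a permutably irreducible `m`-retract `F⟨x₀,…,x_m⟩ = D⟨x₀,…,x_m,o⟩`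
admits a representation `D⟨x̄⟩ = F⟨…, h(xᵢ,x_{m+1}), …⟩` with `h(x,o) = x`. -/
theorem stmt12 {S : Type*} {m : ℕ} (hm : 2 ≤ m) (o : S)
    (D : (Fin (m + 1) → S) → S) (hD : IsNQuasigroup D)
    (hred : PermutablyReducible D)
    (F : (Fin m → S) → S)
    (hF : ∀ y : Fin m → S, F y = D (Fin.snoc y o))
    (hirr : ¬ PermutablyReducible F) :
    ∃ (i : Fin (m + 1)) (h : S → S → S),
      IsBinaryQG h ∧ (∀ x, h x o = x) ∧
      ∀ z : Fin (m + 2) → S,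
        (z 0 = D fun j : Fin (m + 1) => z j.succ) ↔
        ((fun w : Fin (m + 1) → S => w 0 = F fun j : Fin m => w j.succ)
          (fun j : Fin (m + 1) =>
            if j = i then h (z j.castSucc) (z (Fin.last (m + 1))) else z j.castSucc)) := by
  have : Nonempty S := ⟨o⟩
  obtain rfl : F = fun y => D (Fin.snoc y o) := funext hF
  obtain ⟨i, hi⟩ := exists_splitsOver_castSucc_last hred hirr
  obtain ⟨h, hh, hho, hP⟩ := hi.exists_right_unital (Fin.castSucc_ne_last i) o
  refine ⟨i, h, hh, hho, fun z => ?_⟩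
  have ite_eq_update :
      (fun j => if j = i then h (z j.castSucc) (z (Fin.last (m + 1))) else z j.castSucc) =
        update (Fin.init z) i (h (z i.castSucc) (z (Fin.last (m + 1)))) := by
    funext j
    rcases eq_or_ne j i with rfl | hj
    · rw [if_pos rfl, update_self]
    · rw [if_neg hj, update_of_ne hj, Fin.init]
  rw [ite_eq_update]
  change GraphPredicate D z ↔ GraphPredicate (fun y => D (Fin.snoc y o)) _
  rw [hP, update_last_eq_snoc_init, Fin.init_update_castSucc, graphPredicate_snoc]
end
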